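/- arXiv:2506.07991 — 2 statements merged into one kernel-verified Lean document; each statement's English description precedes it below -/
import Mathlib

section
/- Let n be an integer with |n| > 1 having exactly k distinct prime divisors. Then the outer automorphism group Out(BS(1,n)) is virtually free abelian of rank k − 1; that is, Out(BS(1,n)) contains a subgroup of finite index isomorphic to ℤ^{k−1}. In particular, when k ≥ 2 the group Out(BS(1,n)) is infinite and virtually ℤ^{k−1}. -/
/-!
The group `BS(1,n)` is realised as the group of affine maps `v ↦ n ^ m * v + a` of `ℚ` with
`a ∈ ℤ[1/n]` and `m ∈ ℤ`, by letting `x` act as `v ↦ v + 1` and `t` as `v ↦ v / n` (`rho`,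
`rho_injective`, `mem_rho_range`). Every automorphism of `BS(1,n)` is conjugation by an affine map
of `ℚ` (`exists_conj_eq`), and only the identity centralizes `BS(1,n)`. Hence `Out(BS(1,n))` is
`N / BS(1,n)`, where `N` is the normalizer of `BS(1,n)` among affine maps (`psi_surjective`,
`psi_eq_one_iff`).

The maps `v ↦ u * v + b` in `N` have `u` a unit of `ℤ[1/n]` and `(n - 1) * b ∈ ℤ[1/n]`. Modulo
`ℤ[1/n]` there are finitely many such `b` (`exists_translation_decomp`). As for `u`, fix a prime
`p₀` dividing `n`. The products of powers of the other `k - 1` primes dividing `n` form a free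
abelian group of rank `k - 1` which meets the powers of `n` trivially, by the `p₀`-adic valuation
(`diagOut_injective`). Together with the powers of `n`, this group has finite index among the units
of `ℤ[1/n]` (`exists_unit_decomp`), so the corresponding dilations give a finite index subgroup of
`Out(BS(1,n))` isomorphic to `ℤ ^ (k - 1)` (`diagOut_range_finiteIndex`).
-/


/-- Defining relation of the Baumslag–Solitar group `BS(1,n)`:
`t⁻¹ * x * t * x⁻ⁿ`, where `x = of false` and `t = of true`. -/
def bsRels (n : ℤ) : Set (FreeGroup Bool) :=
  {(FreeGroup.of true)⁻¹ * FreeGroup.of false * FreeGroup.of true * (FreeGroup.of false) ^ (-n)}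

/-- The Baumslag–Solitar group `BS(1,n) = ⟨x, t ∣ t⁻¹ x t = xⁿ⟩`. -/
def BS (n : ℤ) : Type := PresentedGroup (bsRels n)

instance (n : ℤ) : Group (BS n) := inferInstanceAs (Group (PresentedGroup (bsRels n)))

/-- The group of inner automorphisms of `G`, as a subgroup of `Aut(G)`. -/
def Inn (G : Type*) [Group G] : Subgroup (MulAut G) := (MulAut.conj (G := G)).range

instance Inn.normal (G : Type*) [Group G] : (Inn G).Normal := by
  constructor
  rintro - ⟨h, rfl⟩ g
  refine ⟨g h, ?_⟩
  ext x
  simp [MulAut.conj, mul_assoc]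

/-- The outer automorphism group `Out(G) = Aut(G)/Inn(G)`. -/
def Out (G : Type*) [Group G] := MulAut G ⧸ Inn G

instance (G : Type*) [Group G] : Group (Out G) :=
  inferInstanceAs (Group (MulAut G ⧸ Inn G))

/-! ### The affine group of `ℚ` -/

/-- The affine map `v ↦ u * v + b` of `ℚ`, with `u ≠ 0`. -/
@[ext] structure AffQ where
  /-- The translation part. -/
  b : ℚ
  /-- The linear part. -/
  u : ℚˣ

namespace AffQ

instance : Mul AffQ := ⟨fun f g => ⟨f.b + f.u * g.b, f.u * g.u⟩⟩
instance : One AffQ := ⟨⟨0, 1⟩⟩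
instance : Inv AffQ := ⟨fun f => ⟨-((f.u⁻¹ : ℚˣ) * f.b), f.u⁻¹⟩⟩

@[simp] lemma mul_b (f g : AffQ) : (f * g).b = f.b + f.u * g.b := rfl
@[simp] lemma mul_u (f g : AffQ) : (f * g).u = f.u * g.u := rfl
@[simp] lemma one_b : (1 : AffQ).b = 0 := rfl
@[simp] lemma one_u : (1 : AffQ).u = 1 := rfl
@[simp] lemma inv_b (f : AffQ) : (f⁻¹).b = -((f.u⁻¹ : ℚˣ) * f.b) := rfl
@[simp] lemma inv_u (f : AffQ) : (f⁻¹).u = f.u⁻¹ := rfl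

/-- Affine maps under composition. -/
instance : Group AffQ where
  mul_assoc f g h := by ext <;> simp <;> ring
  one_mul f := by ext <;> simp
  mul_one f := by ext <;> simp
  inv_mul_cancel f := by ext <;> simp

/-- Translation by a rational number. -/
def tr : Multiplicative ℚ →* AffQ where
  toFun b := ⟨b.toAdd, 1⟩
  map_one' := rfl
  map_mul' a b := by ext <;> simp

/-- Dilation by a nonzero rational number. -/
def dil : ℚˣ →* AffQ where
  toFun u := ⟨0, u⟩
  map_one' := rfl
  map_mul' a b := by ext <;> simp

/-- The linear part, as a homomorphism. -/
def lin : AffQ →* ℚˣ where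
  toFun f := f.u
  map_one' := rfl
  map_mul' _ _ := rfl

@[simp] lemma dil_b (u : ℚˣ) : (dil u).b = 0 := rfl
@[simp] lemma dil_u (u : ℚˣ) : (dil u).u = u := rfl
@[simp] lemma lin_apply (f : AffQ) : lin f = f.u := rfl

@[simp] lemma dil_pow_b (u : ℚˣ) (k : ℕ) : (dil u ^ k).b = 0 := by rw [← map_pow]; rfl
@[simp] lemma dil_pow_u (u : ℚˣ) (k : ℕ) : (dil u ^ k).u = u ^ k := by rw [← map_pow]; rfl
@[simp] lemma dil_zpow_b (u : ℚˣ) (k : ℤ) : (dil u ^ k).b = 0 := by rw [← map_zpow]; rfl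
@[simp] lemma dil_zpow_u (u : ℚˣ) (k : ℤ) : (dil u ^ k).u = u ^ k := by rw [← map_zpow]; rfl

lemma tr_zpow (b : ℚ) (c : ℤ) : (⟨b, 1⟩ : AffQ) ^ c = ⟨c * b, 1⟩ := by
  have h := map_zpow tr (Multiplicative.ofAdd b) c
  rw [← ofAdd_zsmul] at h
  simpa [tr] using h.symm

end AffQ

/-! ### The ring `ℤ[1/n]` -/

/-- `ℤ[1/n]` as a subring of `ℚ`: the rationals `a` such that `a * n ^ i` is an integer for
some `i`. -/
def zInv (n : ℤ) : Subring ℚ where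
  carrier := {a | ∃ (i : ℕ) (c : ℤ), a * (n : ℚ) ^ i = c}
  one_mem' := ⟨0, 1, by simp⟩
  zero_mem' := ⟨0, 0, by simp⟩
  neg_mem' := by
    rintro a ⟨i, c, h⟩
    exact ⟨i, -c, by push_cast; linear_combination -h⟩
  mul_mem' := by
    rintro a b ⟨i, c, h⟩ ⟨j, d, k⟩
    refine ⟨i + j, c * d, ?_⟩
    push_cast
    rw [← h, ← k]; ring
  add_mem' := by
    rintro a b ⟨i, c, h⟩ ⟨j, d, k⟩
    refine ⟨i + j, c * n ^ j + d * n ^ i, ?_⟩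
    push_cast
    rw [← h, ← k]; ring

lemma mem_zInv {n : ℤ} {a : ℚ} : a ∈ zInv n ↔ ∃ (i : ℕ) (c : ℤ), a * (n : ℚ) ^ i = c := Iff.rfl

lemma cast_ne_zero_of_abs {n : ℤ} (hn : 1 < |n|) : (n : ℚ) ≠ 0 := by
  rintro h
  have : n = 0 := by exact_mod_cast h
  simp [this] at hn

lemma sub_one_ne_zero_of_abs {n : ℤ} (hn : 1 < |n|) : (n : ℚ) - 1 ≠ 0 := by
  rintro h
  have : n = 1 := by exact_mod_cast sub_eq_zero.1 h
  simp [this] at hn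

/-- The integer `n`, as a unit of `ℚ`. -/
def nUnit {n : ℤ} (hn : 1 < |n|) : ℚˣ := Units.mk0 n (cast_ne_zero_of_abs hn)

@[simp] lemma nUnit_val {n : ℤ} (hn : 1 < |n|) : (nUnit hn : ℚ) = n := rfl

/-- No nontrivial power of `n` is a root of unity. -/
lemma nUnit_zpow_pow {n : ℤ} (hn : 1 < |n|) {m k : ℤ} (hk : k ≠ 0)
    (h : (nUnit hn ^ m) ^ k = 1) : m = 0 := by
  have h1 : |(n : ℚ)| ^ (m * k) = 1 := by
    rw [← abs_zpow, ← nUnit_val hn, ← Units.val_zpow_eq_zpow_val, zpow_mul, h]; simp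
  have h2 : (1 : ℚ) < |(n : ℚ)| := by exact_mod_cast hn
  have h3 : m * k = 0 := by
    refine zpow_right_injective₀ (zero_lt_one.trans h2) h2.ne' ?_
    simpa using h1
  exact (mul_eq_zero.1 h3).resolve_right hk

lemma zpow_mem_zInv {n : ℤ} (hn : 1 < |n|) (m : ℤ) : ((nUnit hn ^ m : ℚˣ) : ℚ) ∈ zInv n := by
  have h0 := cast_ne_zero_of_abs hn
  rcases m.eq_nat_or_neg with ⟨k, rfl | rfl⟩
  · exact ⟨0, n ^ k, by simp⟩
  · exact ⟨k, 1, by simp [h0]⟩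

/-! ### `BS(1,n)` as a group of affine maps -/

/-- The generator `x` of `BS(1,n)`. -/
def bsX (n : ℤ) : BS n := PresentedGroup.of (rels := bsRels n) false

/-- The generator `t` of `BS(1,n)`. -/
def bsT (n : ℤ) : BS n := PresentedGroup.of (rels := bsRels n) true

lemma bs_rel (n : ℤ) : (bsT n)⁻¹ * bsX n * bsT n = bsX n ^ n := by
  have h := PresentedGroup.one_of_mem (rels := bsRels n) rfl
  have h' : (bsT n)⁻¹ * bsX n * bsT n * bsX n ^ (-n) = 1 := by
    simp only [map_mul, map_inv, map_zpow] at h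
    exact h
  rwa [zpow_neg, mul_inv_eq_one] at h'

lemma bs_hom_ext {n : ℤ} {G : Type*} [Group G] {f g : BS n →* G} (hx : f (bsX n) = g (bsX n))
    (ht : f (bsT n) = g (bsT n)) : f = g := by
  refine PresentedGroup.ext (rels := bsRels n) (φ := f) (ψ := g) ?_
  rintro (_ | _)
  · exact hx
  · exact ht

lemma bs_conj (n : ℤ) (c : ℤ) (i : ℕ) :
    bsX n ^ c * bsT n ^ i = bsT n ^ i * bsX n ^ (c * n ^ i) := by
  induction i generalizing c with
  | zero => simp
  | succ i ih =>
    have h : bsX n ^ (c * n ^ i) * bsT n = bsT n * bsX n ^ (c * n ^ i * n) := by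
      rw [mul_comm _ n, zpow_mul (bsX n) n, ← bs_rel]
      have := conj_zpow (i := c * n ^ i) (a := (bsT n)⁻¹) (b := bsX n)
      rw [inv_inv] at this
      rw [this]; group
    rw [pow_succ, ← mul_assoc, ih, mul_assoc, h, ← mul_assoc, pow_succ, ← mul_assoc c]

/-- Every element of `BS(1,n)` can be written `t ^ i * x ^ c * t ^ (-j)` with `i, j ≥ 0`. -/
lemma bs_normal_form {n : ℤ} (g : BS n) :
    ∃ (i j : ℕ) (c : ℤ), g = bsT n ^ i * bsX n ^ c * (bsT n ^ j)⁻¹ := by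
  have hg : g ∈ Subgroup.closure (Set.range (PresentedGroup.of (rels := bsRels n))) := by
    rw [PresentedGroup.closure_range_of]; trivial
  have key : ∀ (e : ℤ) (i j : ℕ) (c : ℤ),
      bsX n ^ e * (bsT n ^ i * bsX n ^ c * (bsT n ^ j)⁻¹) =
        bsT n ^ i * bsX n ^ (e * n ^ i + c) * (bsT n ^ j)⁻¹ := by
    intro e i j c
    rw [← mul_assoc, ← mul_assoc, bs_conj, mul_assoc (bsT n ^ i), ← zpow_add]
  induction hg using Subgroup.closure_induction_left with
  | one => exact ⟨0, 0, 0, by simp; rfl⟩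
  | mul_left y hy g _ ih =>
    obtain ⟨i, j, c, rfl⟩ := ih
    obtain ⟨_ | _, rfl⟩ := hy
    · refine ⟨i, j, 1 * n ^ i + c, ?_⟩
      rw [← key 1 i j c, zpow_one]; rfl
    · refine ⟨i + 1, j, c, ?_⟩
      rw [pow_succ', mul_assoc (bsT n), mul_assoc (bsT n)]; rfl
  | inv_mul_cancel y hy g _ ih =>
    obtain ⟨i, j, c, rfl⟩ := ih
    obtain ⟨_ | _, rfl⟩ := hy
    · refine ⟨i, j, -1 * n ^ i + c, ?_⟩
      rw [← key (-1) i j c, zpow_neg_one]; rfl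
    · change ∃ _ _ _, (bsT n)⁻¹ * _ = _
      rcases i with _ | i
      · refine ⟨0, j + 1, c * n, ?_⟩
        have h := bs_conj n c 1
        simp only [pow_one] at h
        rw [pow_succ, mul_inv_rev, pow_zero, one_mul, one_mul, ← mul_assoc, ← mul_assoc]
        congr 1
        rw [eq_mul_inv_iff_mul_eq, mul_assoc, h, inv_mul_cancel_left]
      · refine ⟨i, j, c, ?_⟩
        rw [pow_succ']; group

/-- The affine representation of `BS(1,n)`: `x` acts as `v ↦ v + 1` and `t` as `v ↦ v / n`. -/
def rho {n : ℤ} (hn : 1 < |n|) : BS n →* AffQ :=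
  PresentedGroup.toGroup (rels := bsRels n)
    (f := fun s => if s then AffQ.dil (nUnit hn)⁻¹ else ⟨1, 1⟩) (by
      rintro r rfl
      have := cast_ne_zero_of_abs hn
      simp only [map_mul, map_inv, map_zpow, FreeGroup.lift_apply_of]
      simp only [Bool.false_eq_true, if_false, if_true, AffQ.tr_zpow]
      ext <;> simp)

@[simp] lemma rho_x {n : ℤ} (hn : 1 < |n|) : rho hn (bsX n) = ⟨1, 1⟩ :=
  PresentedGroup.toGroup.of (rels := bsRels n) _
@[simp] lemma rho_t {n : ℤ} (hn : 1 < |n|) : rho hn (bsT n) = AffQ.dil (nUnit hn)⁻¹ :=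
  PresentedGroup.toGroup.of (rels := bsRels n) _

lemma rho_normal_form {n : ℤ} (hn : 1 < |n|) (i j : ℕ) (c : ℤ) :
    rho hn (bsT n ^ i * bsX n ^ c * (bsT n ^ j)⁻¹) =
      ⟨c * ((n : ℚ) ^ i)⁻¹, nUnit hn ^ ((j : ℤ) - i)⟩ := by
  have e : (nUnit hn)⁻¹ ^ i * ((nUnit hn)⁻¹ ^ j)⁻¹ = nUnit hn ^ ((j : ℤ) - i) := by
    rw [zpow_sub, zpow_natCast, zpow_natCast, inv_pow, inv_pow, inv_inv, mul_comm]
  simp only [map_mul, map_inv, map_pow, map_zpow, rho_x, rho_t, AffQ.tr_zpow, ← e]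
  simp only [← map_pow, ← map_inv]
  ext <;> simp [mul_comm]

lemma rho_injective {n : ℤ} (hn : 1 < |n|) : Function.Injective (rho hn) := by
  rw [injective_iff_map_eq_one]
  intro g hg
  obtain ⟨i, j, c, rfl⟩ := bs_normal_form g
  rw [rho_normal_form] at hg
  have hb := congrArg AffQ.b hg
  have hu := congrArg AffQ.u hg
  have h0 := cast_ne_zero_of_abs hn
  have hc : c = 0 := by simpa [h0] using hb
  have hm := nUnit_zpow_pow hn (m := (j : ℤ) - i) one_ne_zero (by simpa using hu)
  obtain rfl : j = i := by omega
  simp [hc]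

lemma mem_rho_range {n : ℤ} (hn : 1 < |n|) {w : AffQ} :
    w ∈ (rho hn).range ↔ w.b ∈ zInv n ∧ ∃ m : ℤ, w.u = nUnit hn ^ m := by
  have h0 := cast_ne_zero_of_abs hn
  constructor
  · rintro ⟨g, rfl⟩
    obtain ⟨i, j, c, rfl⟩ := bs_normal_form g
    rw [rho_normal_form]
    exact ⟨⟨i, c, by simp [h0]⟩, _, rfl⟩
  · rintro ⟨⟨i, c, h⟩, m, hm⟩
    -- `t ^ i * x ^ c * t ^ (-i)` is the translation part
    refine ⟨bsT n ^ i * bsX n ^ c * (bsT n ^ i)⁻¹ * bsT n ^ (-m), ?_⟩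
    rw [map_mul, rho_normal_form, map_zpow, rho_t, ← map_zpow]
    ext
    · simp [← h, h0]
    · simp [hm]

/-! ### Automorphisms of `BS(1,n)` are conjugations by affine maps -/

/-- The affine maps normalizing the image of `BS(1,n)`. -/
abbrev affN {n : ℤ} (hn : 1 < |n|) : Subgroup AffQ :=
  Subgroup.normalizer ((rho hn).range : Set AffQ)

/-- The action of the affine normalizer on `BS(1,n)` by conjugation. -/
noncomputable def theta {n : ℤ} (hn : 1 < |n|) : affN hn →* MulAut (BS n) :=
  (MulAut.congr (MonoidHom.ofInjective (rho_injective hn)).symm).toMonoidHom.comp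
    (rho hn).range.normalizerMonoidHom

lemma rho_theta {n : ℤ} (hn : 1 < |n|) (w : affN hn) (g : BS n) :
    rho hn (theta hn w g) = w * rho hn g * (w : AffQ)⁻¹ := by
  have h : ∀ y : (rho hn).range,
      rho hn ((MonoidHom.ofInjective (rho_injective hn)).symm y) = y := fun y => by
    rw [← MonoidHom.ofInjective_apply (rho_injective hn), MulEquiv.apply_symm_apply]
  change rho hn ((MonoidHom.ofInjective (rho_injective hn)).symm _) = _
  rw [h]; rfl

/-- The image of `BS(1,n)` has trivial centralizer in the affine group. -/
lemma eq_one_of_commute {n : ℤ} (hn : 1 < |n|) {w : AffQ}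
    (hw : ∀ g, w * rho hn g * w⁻¹ = rho hn g) : w = 1 := by
  have h0 := cast_ne_zero_of_abs hn
  have h1 := sub_one_ne_zero_of_abs hn
  have hu : w.u = 1 := by
    have := congrArg AffQ.b (mul_inv_eq_iff_eq_mul.1 (hw (bsX n)))
    simp at this
    have h : (w.u : ℚ) = 1 := by linarith
    exact Units.ext h
  have hb := congrArg AffQ.b (mul_inv_eq_iff_eq_mul.1 (hw (bsT n)))
  simp at hb
  have : ((n : ℚ) - 1) * w.b = 0 := by
    field_simp at hb; linear_combination hb
  ext
  · simpa [h1] using this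
  · simp [hu]

/-- Every automorphism of `BS(1,n)` is induced by an affine map `w`: the images of `x` and `t`
are forced to be affine maps of slope `1` and `1 / n`, so the linear part of `w` can be read off
the image of `x`, and the translation part is then determined by the image of `t`. -/
lemma exists_conj_eq {n : ℤ} (hn : 1 < |n|) (α : MulAut (BS n)) :
    ∃ w : AffQ, ∀ g, rho hn (α g) = w * rho hn g * w⁻¹ := by
  have h0 := cast_ne_zero_of_abs hn
  have h1 := sub_one_ne_zero_of_abs hn
  obtain ⟨a, ua, hX⟩ : ∃ a u, rho hn (α (bsX n)) = ⟨a, u⟩ := ⟨_, _, rfl⟩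
  obtain ⟨d, q, hT⟩ : ∃ a u, rho hn (α (bsT n)) = ⟨a, u⟩ := ⟨_, _, rfl⟩
  have hrel : (⟨d, q⟩ : AffQ)⁻¹ * ⟨a, ua⟩ * ⟨d, q⟩ = ⟨a, ua⟩ ^ n := by
    rw [← hX, ← hT, ← map_zpow, ← map_zpow, ← bs_rel]; simp
  obtain ⟨-, m, hm⟩ := (mem_rho_range hn).1 ⟨_, hX⟩
  have hu : ua = 1 := by
    have h := congrArg AffQ.lin hrel
    rw [map_zpow] at h
    simp only [map_mul, map_inv, AffQ.lin_apply] at h hm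
    have h2 : (nUnit hn ^ m) ^ (n - 1) = 1 := by
      rw [← hm, zpow_sub_one, ← h, mul_comm q⁻¹ ua]; simp
    have := nUnit_zpow_pow hn (fun h => h1 (by exact_mod_cast h)) h2
    rw [hm, this, zpow_zero]
  subst hu
  have ha : a ≠ 0 := by
    rintro rfl
    have h3 : rho hn (α (bsX n)) = 1 := hX
    rw [map_eq_one_iff _ (rho_injective hn), map_eq_one_iff _ α.injective] at h3
    have := congrArg AffQ.b (congrArg (rho hn) h3)
    simp at this
  have hq : q = (nUnit hn)⁻¹ := by
    rw [AffQ.tr_zpow] at hrel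
    have := congrArg AffQ.b hrel
    simp at this
    have h4 : (q : ℚ)⁻¹ = n := this.resolve_right ha
    ext; simp [← h4]
  subst hq
  refine ⟨⟨n * d / (n - 1), Units.mk0 a ha⟩, fun g => ?_⟩
  refine DFunLike.congr_fun (f := (rho hn).comp α.toMonoidHom)
    (g := (MulAut.conj (⟨n * d / (n - 1), Units.mk0 a ha⟩ : AffQ)).toMonoidHom.comp (rho hn)) ?_ g
  apply bs_hom_ext
  · change rho hn (α (bsX n)) = _ * rho hn (bsX n) * _
    rw [hX, eq_mul_inv_iff_mul_eq, rho_x]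
    ext <;> simp [add_comm]
  · change rho hn (α (bsT n)) = _ * rho hn (bsT n) * _
    rw [hT, eq_mul_inv_iff_mul_eq, rho_t]
    ext
    · simp; field_simp; ring
    · simp [mul_comm]

lemma theta_surjective {n : ℤ} (hn : 1 < |n|) : Function.Surjective (theta hn) := by
  intro α
  obtain ⟨w, hw⟩ := exists_conj_eq hn α
  have hN : w ∈ affN hn := by
    rw [Subgroup.mem_normalizer_iff]
    intro h
    constructor
    · rintro ⟨g, rfl⟩
      exact ⟨α g, hw g⟩
    · rintro ⟨g, hg⟩
      refine ⟨α.symm g, ?_⟩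
      have h2 := hw (α.symm g)
      rw [MulEquiv.apply_symm_apply, hg] at h2
      exact (mul_left_cancel (mul_right_cancel h2)).symm
  refine ⟨⟨w, hN⟩, ?_⟩
  ext g
  apply rho_injective hn
  rw [rho_theta, hw]

/-- The projection of the affine normalizer onto the outer automorphism group. -/
noncomputable def psi {n : ℤ} (hn : 1 < |n|) : affN hn →* Out (BS n) :=
  (QuotientGroup.mk' (Inn (BS n))).comp (theta hn)

lemma psi_surjective {n : ℤ} (hn : 1 < |n|) : Function.Surjective (psi hn) :=
  (QuotientGroup.mk'_surjective _).comp (theta_surjective hn)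

/-- `Out(BS(1,n))` is the quotient of the affine normalizer by `BS(1,n)` itself. -/
lemma psi_eq_one_iff {n : ℤ} (hn : 1 < |n|) (w : affN hn) :
    psi hn w = 1 ↔ (w : AffQ) ∈ (rho hn).range := by
  have : psi hn w = 1 ↔ theta hn w ∈ Inn (BS n) := QuotientGroup.eq_one_iff _
  rw [this]
  constructor
  · rintro ⟨g, hg⟩
    refine ⟨g, ?_⟩
    have h : (rho hn g)⁻¹ * (w : AffQ) = 1 := by
      refine eq_one_of_commute hn fun y => ?_
      have h2 := rho_theta hn w y
      rw [← hg, MulAut.conj_apply, map_mul, map_mul, map_inv] at h2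
      rw [mul_inv_rev, inv_inv, mul_assoc, mul_assoc, ← mul_assoc (rho hn y), ← mul_assoc (w : AffQ),
        ← mul_assoc (w : AffQ), ← h2]
      group
    exact inv_mul_eq_one.1 h
  · rintro ⟨g, hg⟩
    refine ⟨g, ?_⟩
    ext y
    apply rho_injective hn
    rw [rho_theta, ← hg]
    simp

/-! ### The affine normalizer of `BS(1,n)` -/

/-- The units of `ℤ[1/n]`, as a subgroup of `ℚˣ`. -/
def zInvUnits (n : ℤ) : Subgroup ℚˣ where
  carrier := {u | (u : ℚ) ∈ zInv n ∧ ((u⁻¹ : ℚˣ) : ℚ) ∈ zInv n}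
  one_mem' := by simp [(zInv n).one_mem]
  mul_mem' := by
    rintro u v ⟨h, h'⟩ ⟨k, k'⟩
    refine ⟨?_, ?_⟩
    · rw [Units.val_mul]; exact mul_mem h k
    · rw [mul_inv, Units.val_mul]; exact mul_mem h' k'
  inv_mem' := by
    rintro u ⟨h, h'⟩
    exact ⟨h', by rwa [inv_inv]⟩

lemma mem_zInvUnits {n : ℤ} {u : ℚˣ} :
    u ∈ zInvUnits n ↔ (u : ℚ) ∈ zInv n ∧ ((u⁻¹ : ℚˣ) : ℚ) ∈ zInv n := Iff.rfl

lemma nUnit_mem {n : ℤ} (hn : 1 < |n|) : nUnit hn ∈ zInvUnits n :=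
  ⟨by simp, by simpa using zpow_mem_zInv hn (-1)⟩

/-- Dilation by a unit `u` of `ℤ[1/n]` normalizes the image of `BS(1,n)`: it multiplies
translation parts by `u` and keeps linear parts. -/
lemma dil_mem_affN {n : ℤ} (hn : 1 < |n|) {u : ℚˣ} (hu : u ∈ zInvUnits n) :
    AffQ.dil u ∈ affN hn := by
  have key : ∀ {u : ℚˣ} (_ : (u : ℚ) ∈ zInv n) {h : AffQ} (_ : h ∈ (rho hn).range),
      AffQ.dil u * h * (AffQ.dil u)⁻¹ ∈ (rho hn).range := by
    intro u hu h hh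
    rw [mem_rho_range] at hh ⊢
    obtain ⟨hb, m, hm⟩ := hh
    refine ⟨?_, m, ?_⟩
    · simpa using mul_mem hu hb
    · simp [hm]
  rw [Subgroup.mem_normalizer_iff]
  intro h
  refine ⟨fun hh => key hu.1 hh, fun hh => ?_⟩
  have := key hu.2 hh
  rw [map_inv] at this
  simpa [mul_assoc] using this

/-- Dilations by units of `ℤ[1/n]`, as elements of the affine normalizer. -/
def dilN {n : ℤ} (hn : 1 < |n|) : zInvUnits n →* affN hn :=
  (AffQ.dil.comp (zInvUnits n).subtype).codRestrict _ fun u => dil_mem_affN hn u.2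

@[simp] lemma dilN_val {n : ℤ} (hn : 1 < |n|) (u : zInvUnits n) :
    (dilN hn u : AffQ) = AffQ.dil (u : ℚˣ) := rfl

lemma u_mem_of_mem_affN {n : ℤ} (hn : 1 < |n|) {w : AffQ} (hw : w ∈ affN hn) :
    w.u ∈ zInvUnits n := by
  -- conjugation by `w` sends the translation by `1` to the translation by `w.u`
  have key : ∀ {w : AffQ}, w ∈ affN hn → (w.u : ℚ) ∈ zInv n := by
    intro w hw
    have h := (Subgroup.mem_normalizer_iff.1 hw _).1 ⟨bsX n, rfl⟩
    have h2 := ((mem_rho_range hn).1 h).1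
    simpa using h2
  exact ⟨key hw, key (inv_mem hw)⟩

/-- The constraint on the translation part comes from conjugating `t`, whose image has
translation part `(1 - 1 / n) * w.b`. -/
lemma b_mem_of_mem_affN {n : ℤ} (hn : 1 < |n|) {w : AffQ} (hw : w ∈ affN hn) :
    ((n : ℚ) - 1) * w.b ∈ zInv n := by
  have h0 := cast_ne_zero_of_abs hn
  have h := (Subgroup.mem_normalizer_iff.1 hw _).1 ⟨bsT n, rfl⟩
  have h2 := mul_mem (nUnit_mem hn).1 ((mem_rho_range hn).1 h).1
  convert h2 using 1
  simp; field_simp; ring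

/-- Every element of `ℤ[1/n]` is congruent modulo `(n - 1) ℤ[1/n]` to an integer `j` with
`0 ≤ j < |n - 1|`, since `n` is `1` modulo `n - 1`. The statement is this congruence for
`(n - 1) * b`, divided by `n - 1`. -/
lemma exists_translation_decomp {n : ℤ} (hn : 1 < |n|) {b : ℚ}
    (hb : ((n : ℚ) - 1) * b ∈ zInv n) :
    ∃ j ∈ Set.Ico 0 |n - 1|, ∃ a ∈ zInv n, b = a + (j : ℚ) / ((n : ℚ) - 1) := by
  have h1 := sub_one_ne_zero_of_abs hn
  have h1' : n - 1 ≠ 0 := fun h => h1 (by exact_mod_cast h)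
  obtain ⟨i, c, hc⟩ := mem_zInv.1 hb
  obtain ⟨s, hs⟩ : n - 1 ∣ n ^ i - 1 := by simpa using sub_dvd_pow_sub_pow n 1 i
  have hs' : (n : ℚ) ^ i - 1 = (n - 1) * s := by exact_mod_cast hs
  have hj := Int.emod_add_mul_ediv c (n - 1)
  have hj' : ((c % (n - 1) : ℤ) : ℚ) + (n - 1) * ((c / (n - 1) : ℤ) : ℚ) = c := by
    exact_mod_cast hj
  refine ⟨c % (n - 1), ⟨Int.emod_nonneg _ h1', Int.emod_lt_abs _ h1'⟩,
    -(((n : ℚ) - 1) * b * s) + (c / (n - 1) : ℤ), ?_, ?_⟩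
  · exact add_mem (neg_mem (mul_mem hb (intCast_mem _ _))) (intCast_mem _ _)
  · field_simp
    linear_combination hc - hj' - (b * (n - 1)) * hs'

/-! ### The units of `ℤ[1/n]` -/

/-- The `p`-adic valuation as a homomorphism on `ℚˣ`. -/
noncomputable def val (p : ℕ) [Fact p.Prime] : ℚˣ →* Multiplicative ℤ where
  toFun u := Multiplicative.ofAdd (padicValRat p u)
  map_one' := by simp
  map_mul' u v := by simp [padicValRat.mul u.ne_zero v.ne_zero]

lemma val_eq (p : ℕ) [Fact p.Prime] (u : ℚˣ) :
    val p u = Multiplicative.ofAdd (padicValRat p u) := rfl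

lemma eq_one_or_neg_one_of_val {u : ℚˣ} (h : ∀ (p : ℕ) [Fact p.Prime], val p u = 1) :
    u = 1 ∨ u = -1 := by
  have h' : ∀ p : ℕ, p.Prime → padicValInt p (u : ℚ).num = padicValNat p (u : ℚ).den := by
    intro p hp
    have := Fact.mk hp
    have h2 : padicValRat p u = 0 := h p
    rw [padicValRat_def] at h2
    omega
  have hnum : (u : ℚ).num ≠ 0 := by simp
  have hcop := (u : ℚ).reduced
  have h1 : ∀ p : ℕ, p.Prime → (p ∣ (u : ℚ).num.natAbs ↔ p ∣ (u : ℚ).den) := by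
    intro p hp
    have := Fact.mk hp
    rw [dvd_iff_padicValNat_ne_zero (Int.natAbs_ne_zero.2 hnum),
      dvd_iff_padicValNat_ne_zero (u : ℚ).den_nz, ← h' p hp]
    rfl
  have hn1 : (u : ℚ).num.natAbs = 1 := by
    rw [Nat.eq_one_iff_not_exists_prime_dvd]
    intro p hp hd
    exact Nat.not_coprime_of_dvd_of_dvd hp.one_lt hd ((h1 p hp).1 hd) hcop
  have hd1 : (u : ℚ).den = 1 := by
    rw [Nat.eq_one_iff_not_exists_prime_dvd]
    intro p hp hd
    exact Nat.not_coprime_of_dvd_of_dvd hp.one_lt ((h1 p hp).2 hd) hd hcop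
  have hu : (u : ℚ) = (u : ℚ).num := (Rat.coe_int_num_of_den_eq_one hd1).symm
  rcases Int.natAbs_eq_natAbs_iff.1 (hn1.trans Int.natAbs_one.symm) with h3 | h3
  · left; ext; rw [hu, h3]; simp
  · right; ext; rw [hu, h3]; simp

lemma val_eq_one_of_not_dvd {n : ℤ} (hn : 1 < |n|) {u : ℚˣ} (hu : u ∈ zInvUnits n) (p : ℕ)
    [hp : Fact p.Prime] (hpn : ¬ (p : ℤ) ∣ n) : val p u = 1 := by
  have h0 := cast_ne_zero_of_abs hn
  have key : ∀ {u : ℚˣ}, (u : ℚ) ∈ zInv n → 0 ≤ padicValRat p u := by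
    rintro u ⟨i, c, h⟩
    have h2 := congrArg (padicValRat p) h
    rw [padicValRat.mul u.ne_zero (pow_ne_zero _ h0), padicValRat.pow, padicValRat.of_int,
      padicValRat.of_int, padicValInt.eq_zero_of_not_dvd hpn] at h2
    simp at h2
    omega
  have h1 := key hu.1
  have h2 := key hu.2
  rw [Units.val_inv_eq_inv_val, padicValRat.inv] at h2
  rw [val_eq, show padicValRat p u = 0 by omega]; rfl

/-- A prime number, as a unit of `ℚ`. -/
def primeUnit (p : ℕ) [hp : Fact p.Prime] : ℚˣ := Units.mk0 p (by simp [hp.out.ne_zero])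

lemma val_primeUnit (q p : ℕ) [Fact q.Prime] [Fact p.Prime] :
    val q (primeUnit p) = Multiplicative.ofAdd (if q = p then 1 else 0) := by
  rw [val_eq]
  congr 1
  change padicValRat q p = _
  rw [padicValRat.of_nat]
  split_ifs with h
  · subst h; simp
  · simp [padicValNat_primes h]

lemma primeUnit_mem {n : ℤ} (p : ℕ) [hp : Fact p.Prime] (h : (p : ℤ) ∣ n) :
    primeUnit p ∈ zInvUnits n := by
  refine ⟨⟨0, p, by simp [primeUnit]⟩, ?_⟩
  obtain ⟨c, hc⟩ := h
  have : (p : ℚ) ≠ 0 := by simp [hp.out.ne_zero]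
  refine ⟨1, c, ?_⟩
  simp only [primeUnit, Units.val_inv_eq_inv_val, Units.val_mk0, hc]
  push_cast
  field_simp

/-- The homomorphism `e ↦ ∏ p ^ e p` from integer exponent vectors supported on a finite set of
primes. -/
noncomputable def primeProd (S : Finset ℕ) [hS : ∀ p : S, Fact (p : ℕ).Prime] :
    Multiplicative (S → ℤ) →* ℚˣ where
  toFun e := ∏ p : S, primeUnit p ^ (e.toAdd p)
  map_one' := by simp
  map_mul' e f := by simp [zpow_add, Finset.prod_mul_distrib]

lemma val_primeProd (S : Finset ℕ) [hS : ∀ p : S, Fact (p : ℕ).Prime] (q : ℕ) [Fact q.Prime]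
    (e : Multiplicative (S → ℤ)) :
    val q (primeProd S e) = Multiplicative.ofAdd (if h : q ∈ S then e.toAdd ⟨q, h⟩ else 0) := by
  change val q (∏ p : S, primeUnit p ^ (e.toAdd p)) = _
  apply Multiplicative.toAdd.injective
  rw [map_prod, toAdd_prod]
  simp only [map_zpow, val_primeUnit, toAdd_zpow, toAdd_ofAdd]
  split_ifs with h
  · rw [Finset.sum_eq_single ⟨q, h⟩]
    · simp
    · rintro p - hp
      rw [if_neg (fun h' => hp (Subtype.ext h'.symm))]; simp
    · simp
  · refine Finset.sum_eq_zero fun p _ => ?_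
    have hqp : q ≠ p := by rintro rfl; exact h p.2
    rw [if_neg hqp]; simp

lemma primeProd_mem {n : ℤ} (S : Finset ℕ) [hS : ∀ p : S, Fact (p : ℕ).Prime]
    (h : ∀ p ∈ S, (p : ℤ) ∣ n) (e : Multiplicative (S → ℤ)) : primeProd S e ∈ zInvUnits n :=
  prod_mem fun p _ => zpow_mem (primeUnit_mem p (h p p.2)) _

/-- Decomposition of the units of `ℤ[1/n]` modulo the powers of `n`. Fix a prime `p₀ ∣ n`. After
division by a power of `n` and a bounded power of `p₀`, a unit has `p₀`-adic valuation `0`, and is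
then up to sign a product of powers of the other primes dividing `n`. -/
lemma exists_unit_decomp {n : ℤ} (hn : 1 < |n|) (p₀ : ℕ) [hp₀ : Fact p₀.Prime] (h₀ : (p₀ : ℤ) ∣ n)
    (S : Finset ℕ) [hS : ∀ p : S, Fact (p : ℕ).Prime]
    (hSn : ∀ p, p ∈ S ↔ p ≠ p₀ ∧ p.Prime ∧ (p : ℤ) ∣ n)
    {u : ℚˣ} (hu : u ∈ zInvUnits n) :
    ∃ s ∈ ({1, -1} : Set ℚˣ), ∃ r ∈ Set.Ico 0 (val p₀ (nUnit hn)).toAdd, ∃ (m : ℤ)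
      (e : Multiplicative (S → ℤ)),
      u = s * primeUnit p₀ ^ r * nUnit hn ^ m * primeProd S e := by
  set v := (val p₀ (nUnit hn)).toAdd with hv
  have hvpos : 0 < v := by
    have hnz : n ≠ 0 := by rintro rfl; simp at hn
    change 0 < padicValRat p₀ (n : ℚ)
    rw [padicValRat.of_int, padicValInt]
    exact_mod_cast one_le_padicValNat_of_dvd (Int.natAbs_ne_zero.2 hnz) (Int.natCast_dvd.1 h₀)
  set v₀ := (val p₀ u).toAdd with hv₀
  set y := u * (primeUnit p₀ ^ (v₀ % v) * nUnit hn ^ (v₀ / v))⁻¹ with hy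
  have hymem : y ∈ zInvUnits n :=
    mul_mem hu (inv_mem (mul_mem (zpow_mem (primeUnit_mem p₀ h₀) _)
      (zpow_mem (nUnit_mem hn) _)))
  have hy₀ : val p₀ y = 1 := by
    apply Multiplicative.toAdd.injective
    simp only [hy, map_mul, map_inv, map_zpow, val_primeUnit, if_true, toAdd_mul, toAdd_inv,
      toAdd_zpow, toAdd_ofAdd, ← hv, ← hv₀, toAdd_one, smul_eq_mul]
    linarith [Int.emod_add_mul_ediv v₀ v]
  -- the exponents are forced: the valuations of `y` at the primes in `S`
  set e : Multiplicative (S → ℤ) := Multiplicative.ofAdd fun p => (val p y).toAdd with he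
  have hs : y * (primeProd S e)⁻¹ = 1 ∨ y * (primeProd S e)⁻¹ = -1 := by
    apply eq_one_or_neg_one_of_val
    intro p hp
    rw [map_mul, map_inv, mul_inv_eq_one, val_primeProd]
    split_ifs with h
    · rfl
    · by_cases hp₀' : p = p₀
      · subst hp₀'; rw [hy₀]; rfl
      · exact val_eq_one_of_not_dvd hn hymem p fun hd => h ((hSn p).2 ⟨hp₀', hp.out, hd⟩)
  refine ⟨y * (primeProd S e)⁻¹, hs, v₀ % v,
    ⟨Int.emod_nonneg _ hvpos.ne', Int.emod_lt_of_pos _ hvpos⟩, v₀ / v, e, ?_⟩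
  have cancel : ∀ a b c d : ℚˣ, a = a * (b * c)⁻¹ * d⁻¹ * b * c * d := by
    intro a b c d
    ext
    push_cast
    field_simp
  exact cancel _ _ _ _

/-! ### The outer automorphism group -/

/-- The diagonal outer automorphisms `x ↦ x ^ u`, `t ↦ t`, for `u` a product of powers of
primes in `S`. -/
noncomputable def diagOut {n : ℤ} (hn : 1 < |n|) (S : Finset ℕ) [hS : ∀ p : S, Fact (p : ℕ).Prime]
    (h : ∀ p ∈ S, (p : ℤ) ∣ n) : Multiplicative (S → ℤ) →* Out (BS n) :=
  ((psi hn).comp (dilN hn)).comp ((primeProd S).codRestrict _ (primeProd_mem S h))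

/-- If some prime `p₀ ∣ n` is not in `S`, no nontrivial product of primes in `S` is a power of
`n`, so that these outer automorphisms are independent. -/
lemma diagOut_injective {n : ℤ} (hn : 1 < |n|) (p₀ : ℕ) [hp₀ : Fact p₀.Prime] (h₀ : (p₀ : ℤ) ∣ n)
    (S : Finset ℕ) [hS : ∀ p : S, Fact (p : ℕ).Prime] (h : ∀ p ∈ S, (p : ℤ) ∣ n)
    (hS₀ : p₀ ∉ S) : Function.Injective (diagOut hn S h) := by
  rw [injective_iff_map_eq_one]
  intro e he
  obtain ⟨-, m, hm⟩ := (mem_rho_range hn).1 ((psi_eq_one_iff hn _).1 he)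
  replace hm : primeProd S e = nUnit hn ^ m := hm
  have hm0 : m = 0 := by
    have h1 := congrArg (val p₀) hm
    rw [val_primeProd, dif_neg hS₀, map_zpow] at h1
    have h2 : m * (val p₀ (nUnit hn)).toAdd = 0 := congrArg Multiplicative.toAdd h1.symm
    refine (mul_eq_zero.1 h2).resolve_right ?_
    have hnz : n ≠ 0 := by rintro rfl; simp at hn
    change padicValRat p₀ (n : ℚ) ≠ 0
    rw [padicValRat.of_int, padicValInt]
    exact_mod_cast (dvd_iff_padicValNat_ne_zero (Int.natAbs_ne_zero.2 hnz)).1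
      (Int.natCast_dvd.1 h₀)
  rw [hm0, zpow_zero] at hm
  apply Multiplicative.toAdd.injective
  funext p
  have h1 := congrArg (val p) hm
  rw [val_primeProd, dif_pos p.2, map_one] at h1
  exact congrArg Multiplicative.toAdd h1

/-- The diagonal outer automorphisms given by the primes other than `p₀` have finite index: modulo
`BS(1,n)` and these dilations, only finitely many translation parts and linear parts remain. -/
lemma diagOut_range_finiteIndex {n : ℤ} (hn : 1 < |n|) (p₀ : ℕ) [hp₀ : Fact p₀.Prime]
    (h₀ : (p₀ : ℤ) ∣ n) (S : Finset ℕ) [hS : ∀ p : S, Fact (p : ℕ).Prime]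
    (hSn : ∀ p, p ∈ S ↔ p ≠ p₀ ∧ p.Prime ∧ (p : ℤ) ∣ n) :
    (diagOut hn S fun p hp => ((hSn p).1 hp).2.2).range.FiniteIndex := by
  classical
  set H := (diagOut hn S fun p hp => ((hSn p).1 hp).2.2).range
  -- the affine maps with translation part `j / (n - 1)` and linear part `± p₀ ^ r`
  -- represent all left cosets
  let T : Set.Ico 0 |n - 1| × ({1, -1} : Set ℚˣ) × Set.Ico 0 (val p₀ (nUnit hn)).toAdd → AffQ :=
    fun i => ⟨((i.1 : ℤ) : ℚ) / ((n : ℚ) - 1), i.2.1 * primeUnit p₀ ^ (i.2.2 : ℤ)⟩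
  let F : Set.Ico 0 |n - 1| × ({1, -1} : Set ℚˣ) × Set.Ico 0 (val p₀ (nUnit hn)).toAdd →
      Out (BS n) ⧸ H :=
    fun i => QuotientGroup.mk (if h : T i ∈ affN hn then psi hn ⟨T i, h⟩ else 1)
  suffices hF : Function.Surjective F by
    have : Finite (Out (BS n) ⧸ H) := Finite.of_surjective F hF
    exact Subgroup.finiteIndex_of_finite_quotient
  intro o
  obtain ⟨o, rfl⟩ := QuotientGroup.mk_surjective o
  obtain ⟨⟨w, hw⟩, rfl⟩ := psi_surjective hn o
  obtain ⟨j, hj, a, ha, hb⟩ := exists_translation_decomp hn (b_mem_of_mem_affN hn hw)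
  obtain ⟨s, hs, r, hr, m, e, hu⟩ := exists_unit_decomp hn p₀ h₀ S hSn (u_mem_of_mem_affN hn hw)
  refine ⟨⟨⟨j, hj⟩, ⟨s, hs⟩, ⟨r, hr⟩⟩, ?_⟩
  have hA : (⟨a, 1⟩ : AffQ) ∈ (rho hn).range := (mem_rho_range hn).2 ⟨ha, 0, by simp⟩
  have hM : AffQ.dil (nUnit hn ^ m) ∈ (rho hn).range :=
    (mem_rho_range hn).2 ⟨(zInv n).zero_mem, m, rfl⟩
  have hA' : (⟨a, 1⟩ : AffQ) ∈ affN hn := Subgroup.le_normalizer hA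
  have hM' : AffQ.dil (nUnit hn ^ m) ∈ affN hn := Subgroup.le_normalizer hM
  have hE : AffQ.dil (primeProd S e) ∈ affN hn :=
    dil_mem_affN hn (primeProd_mem S (fun p hp => ((hSn p).1 hp).2.2) e)
  have hw' : w = ⟨a, 1⟩ * T ⟨⟨j, hj⟩, ⟨s, hs⟩, ⟨r, hr⟩⟩ * AffQ.dil (nUnit hn ^ m) *
      AffQ.dil (primeProd S e) := by
    ext
    · simp [T, hb]
    · simp [T, hu]
  have hT : T ⟨⟨j, hj⟩, ⟨s, hs⟩, ⟨r, hr⟩⟩ ∈ affN hn := by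
    rw [hw', Subgroup.mul_mem_cancel_right _ hE, Subgroup.mul_mem_cancel_right _ hM',
      Subgroup.mul_mem_cancel_left _ hA'] at hw
    exact hw
  change QuotientGroup.mk (dite _ _ _) = _
  rw [dif_pos hT]
  refine QuotientGroup.eq.2 ⟨e, ?_⟩
  rw [eq_inv_mul_iff_mul_eq]
  have e1 : (⟨w, hw⟩ : affN hn) = ⟨_, hA'⟩ * ⟨_, hT⟩ * ⟨_, hM'⟩ * ⟨_, hE⟩ := Subtype.ext hw'
  rw [e1, map_mul, map_mul, map_mul, (psi_eq_one_iff hn ⟨_, hA'⟩).2 hA,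
    (psi_eq_one_iff hn ⟨_, hM'⟩).2 hM, one_mul, mul_one]
  rfl

/-- If `|n| > 1` has exactly `k` distinct prime divisors, then `Out(BS(1,n))` is
virtually free abelian of rank `k - 1`: it has a finite-index subgroup isomorphic to
`ℤ^(k-1)`. In particular, when `k ≥ 2` the group `Out(BS(1,n))` is infinite. -/
theorem out_BS_virtually_free_abelian (n : ℤ) (hn : 1 < |n|) :
    (∃ H : Subgroup (Out (BS n)), H.FiniteIndex ∧
      Nonempty (H ≃* Multiplicative (Fin (n.natAbs.primeFactors.card - 1) → ℤ))) ∧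
    (2 ≤ n.natAbs.primeFactors.card → Infinite (Out (BS n))) := by
  have hnat : n.natAbs ≠ 1 := by
    intro h
    rw [Int.abs_eq_natAbs, h] at hn
    simp at hn
  have hnz : n.natAbs ≠ 0 := by
    intro h
    rw [Int.abs_eq_natAbs, h] at hn
    simp at hn
  obtain ⟨p₀, hp₀, hd⟩ := Nat.exists_prime_and_dvd hnat
  have : Fact p₀.Prime := ⟨hp₀⟩
  have h₀ : (p₀ : ℤ) ∣ n := Int.natCast_dvd.2 hd
  set S := n.natAbs.primeFactors.erase p₀ with hSdef
  have hSn : ∀ p, p ∈ S ↔ p ≠ p₀ ∧ p.Prime ∧ (p : ℤ) ∣ n := by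
    intro p
    rw [hSdef, Finset.mem_erase, Nat.mem_primeFactors, Int.natCast_dvd]
    simp [hnz]
  have : ∀ p : S, Fact (p : ℕ).Prime := fun p => ⟨((hSn p).1 p.2).2.1⟩
  have hcard : S.card = n.natAbs.primeFactors.card - 1 :=
    Finset.card_erase_of_mem (Nat.mem_primeFactors.2 ⟨hp₀, hd, hnz⟩)
  have hinj := diagOut_injective hn p₀ h₀ S (fun p hp => ((hSn p).1 hp).2.2)
    (fun h => ((hSn p₀).1 h).1 rfl)
  refine ⟨⟨_, diagOut_range_finiteIndex hn p₀ h₀ S hSn, ⟨?_⟩⟩, fun hk => ?_⟩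
  · refine (MonoidHom.ofInjective hinj).symm.trans (AddEquiv.toMultiplicative ?_)
    exact (LinearEquiv.funCongrLeft ℤ ℤ (S.equivFinOfCardEq hcard).symm).toAddEquiv
  · have hne : S.Nonempty := Finset.card_pos.1 (by omega)
    have : Nonempty S := hne.to_subtype
    have : Infinite (S → ℤ) := inferInstance
    have : Infinite (Multiplicative (S → ℤ)) := inferInstance
    exact Infinite.of_injective _ hinj
end

section
/- Let Γ be a virtually FAR group. Then every injective group homomorphism φ : Γ → Γ has image of finite index in Γ. -/
/-!
The only consequences of the FAR condition that matter are solvability and the following property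
(`FinElemSections`): every section `L / M` that is abelian of prime exponent is finite. It passes
to subgroups and quotients, and it is proved along a FAR series, where the abelian factors `A` need
`A / pA` to be finite. For a finitely generated `X ≤ A`, the structure of `X` modulo torsion gives
`|X / pX| ≤ p ^ n * |X[p]|`, with `n` the torsion-free rank of `A`; a lift of more than
`p ^ n * |A[p]|` classes of `A / pA` would generate an `X` violating this bound.

Let now `φ` be an injective endomorphism of a group with `FinElemSections`.

* Abelian group `A`. The space `ℚ ⊗ A` is finite-dimensional, since a free abelian subgroup of
  infinite rank has infinite quotient modulo 2. Cayley–Hamilton for `ℚ ⊗ φ`, with denominators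
  cleared, gives `m ≠ 0` (essentially the determinant) such that `m A` is contained in
  `φ(A)` plus torsion. Torsion is in `φ(A)`, because each `A[k]` is finite and `φ` permutes it.
  So `φ(A) ⊇ m A`, and `A / m A` is finite.
* Solvable group `G`, by induction on the derived length `d + 1`. The subgroup
  `N = {x | φ^j x ∈ G^(d) for all large j}` is normal and satisfies `φ⁻¹(N) = N`, so `φ` induces
  injective endomorphisms of `N` and of `G / N`. It is abelian because `φ` is injective and
  `G^(d)` is abelian, and it contains `G^(d)`, so `G / N` has derived length at most `d`.
  The subgroup `G^(d)` itself would not do, as `φ` need not be injective on `G / G^(d)`.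
* Virtually FAR group. Let `C` be the normal core of a FAR subgroup of finite index and
  `m = [G : C]`. The verbal subgroup `U` generated by the `m`-th powers lies in `C` and is mapped
  into itself by `φ`. It has finite index, since `C / U` is solvable of finite exponent with
  `FinElemSections`. The solvable case applies to the restriction of `φ` to `U`.
-/

/-- The pair of subgroups `K ≤ H` of `G` forms an *abelian factor of finite ranks*:
`K` is normal in `H`, the factor `H/K` is abelian, has finite torsion-free rank
(some `n` bounds the size of any independent family modulo `K`), and for every prime `p`
the `p`-torsion of `H/K` is finite (it is covered by finitely many cosets of `K`). -/
def IsFARFactor {G : Type*} [Group G] (K H : Subgroup G) : Prop :=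
  K ≤ H ∧
  (∀ x ∈ H, ∀ y ∈ K, x * y * x⁻¹ ∈ K) ∧
  (∀ x ∈ H, ∀ y ∈ H, x * y * x⁻¹ * y⁻¹ ∈ K) ∧
  (∃ n : ℕ, ∀ f : Fin (n + 1) → G, (∀ i, f i ∈ H) →
    ∃ c : Fin (n + 1) → ℤ, c ≠ 0 ∧ (List.ofFn fun i => f i ^ c i).prod ∈ K) ∧
  (∀ p : ℕ, p.Prime → ∃ F : Finset G, ∀ x ∈ H, x ^ p ∈ K → ∃ b ∈ F, b⁻¹ * x ∈ K)

/-- A group has *finite abelian ranks* (is a FAR-group) if it admits a finite normal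
series whose factors are abelian groups of finite torsion-free rank and finite `p`-rank
for every prime `p`. -/
def IsFARGroup (G : Type*) [Group G] : Prop :=
  ∃ (n : ℕ) (s : Fin (n + 1) → Subgroup G),
    s 0 = ⊥ ∧ s (Fin.last n) = ⊤ ∧ ∀ i : Fin n, IsFARFactor (s i.castSucc) (s i.succ)

/-- A group is virtually FAR if it has a finite-index subgroup which is a FAR-group. -/
def IsVirtuallyFAR (G : Type*) [Group G] : Prop :=
  ∃ H : Subgroup G, H.FiniteIndex ∧ IsFARGroup H

open scoped commutatorElement

/-! ### Abelian groups of finite rank modulo multiples -/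

/-- Compare `X` with its torsion subgroup `T`: the quotient `X / T` is free, contributing
`p ^ rank`, and `|T / pT| = |T[p]|` as `T` is finite. -/
theorem index_nsmul_le_of_fg (X : Type*) [AddCommGroup X] [Module.Finite ℤ X] {p : ℕ}
    (hp : p ≠ 0) :
    (nsmulAddMonoidHom (α := X) p).range.index ≠ 0 ∧
    (nsmulAddMonoidHom (α := X) p).range.index ≤
      p ^ Module.finrank ℤ (X ⧸ Submodule.torsion ℤ X) *
        Nat.card (nsmulAddMonoidHom (α := X) p).ker := by
  set T : Submodule ℤ X := Submodule.torsion ℤ X with hT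
  have hTfin : Finite T := Module.finite_of_fg_torsion T (Submodule.torsion_isTorsion)
  set N := (nsmulAddMonoidHom (α := X) p).range with hN
  have h1 : N.relIndex (N ⊔ T.toAddSubgroup) * (N ⊔ T.toAddSubgroup).index = N.index :=
    AddSubgroup.relIndex_mul_index le_sup_left
  have h2 : (N ⊔ T.toAddSubgroup).index = p ^ Module.finrank ℤ (X ⧸ T) := by
    rw [← AddSubgroup.index_range_nsmul]
    have hk : T.mkQ.toAddMonoidHom.ker = T.toAddSubgroup := by
      ext x; simp [AddMonoidHom.mem_ker]
    have hm : N.map T.mkQ.toAddMonoidHom = (nsmulAddMonoidHom (α := X ⧸ T) p).range := by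
      ext y
      obtain ⟨y, rfl⟩ := T.mkQ_surjective y
      constructor
      · rintro ⟨_, ⟨x, rfl⟩, hx⟩
        exact ⟨T.mkQ x, by rw [← hx]; simp⟩
      · rintro ⟨z, hz⟩
        obtain ⟨z, rfl⟩ := T.mkQ_surjective z
        exact ⟨p • z, ⟨z, rfl⟩, by rw [← hz]; simp⟩
    rw [← hm, AddSubgroup.index_map, hk,
      AddMonoidHom.range_eq_top_of_surjective _ T.mkQ_surjective, AddSubgroup.index_top, mul_one]
  have hkX : Finite (nsmulAddMonoidHom (α := X) p).ker := by
    refine Set.Finite.subset (s := (T : Set X)) (Set.toFinite _) ?_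
    intro x hx
    refine ⟨⟨(p : ℤ), by simpa using hp⟩, ?_⟩
    have : p • x = 0 := hx
    simpa [Submonoid.smul_def] using this
  have h3 : N.relIndex (N ⊔ T.toAddSubgroup) ∣ (nsmulAddMonoidHom (α := T) p).range.index := by
    rw [AddSubgroup.relIndex_sup_left]
    apply AddSubgroup.index_dvd_of_le
    rintro _ ⟨x, rfl⟩
    exact ⟨(x : X), by simp⟩
  have h4 : (nsmulAddMonoidHom (α := T) p).range.index =
      Nat.card (nsmulAddMonoidHom (α := T) p).ker :=
    AddSubgroup.index_range
  have h5 : Nat.card (nsmulAddMonoidHom (α := T) p).ker ≤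
      Nat.card (nsmulAddMonoidHom (α := X) p).ker := by
    refine Nat.card_le_card_of_injective
      (fun x => ⟨((x : T) : X), by
        have := x.2
        rw [AddMonoidHom.mem_ker] at this ⊢
        simpa using congrArg (Subtype.val) this⟩) ?_
    intro x y h
    apply Subtype.ext; apply Subtype.ext
    simpa using h
  have h6 : N.relIndex (N ⊔ T.toAddSubgroup) ≤ Nat.card (nsmulAddMonoidHom (α := X) p).ker :=
    (Nat.le_of_dvd (by rw [h4]; exact Nat.card_pos) h3).trans (h4.le.trans h5)
  have h7 : N.relIndex (N ⊔ T.toAddSubgroup) ≠ 0 := by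
    intro h0
    rw [h0, h4] at h3
    exact Nat.card_pos.ne' (Nat.eq_zero_of_zero_dvd h3)
  rw [← h1, h2]
  refine ⟨mul_ne_zero h7 (pow_ne_zero _ hp), ?_⟩
  rw [mul_comm]
  gcongr

/-- An abelian group with torsion-free rank at most `n` and finite `p`-torsion has finitely many
classes modulo `p`, by the uniform bound for its finitely generated subgroups. -/
theorem index_nsmul_ne_zero_of_rank (D : Type*) [AddCommGroup D] {n p : ℕ} (hp : p ≠ 0)
    (hrank : ∀ f : Fin (n + 1) → D, ∃ c : Fin (n + 1) → ℤ, c ≠ 0 ∧ ∑ i, c i • f i = 0)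
    (htors : Finite (nsmulAddMonoidHom (α := D) p).ker) :
    (nsmulAddMonoidHom (α := D) p).range.index ≠ 0 := by
  set N := (nsmulAddMonoidHom (α := D) p).range with hN
  set C := p ^ n * Nat.card (nsmulAddMonoidHom (α := D) p).ker with hC
  suffices h : Finite (D ⧸ N) from AddSubgroup.index_ne_zero_of_finite
  by_contra hinf
  rw [not_finite_iff_infinite] at hinf
  obtain ⟨S, hS⟩ := Infinite.exists_subset_card_eq (D ⧸ N) (C + 1)
  classical
  -- generated by representatives of more than `C` classes modulo `p`
  let X : AddSubgroup D := AddSubgroup.closure (Quotient.out '' (S : Set (D ⧸ N)))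
  have : AddGroup.FG X := by
    rw [AddGroup.fg_iff_addSubgroup_fg, AddSubgroup.fg_iff]
    exact ⟨_, rfl, (S.finite_toSet).image _⟩
  have : Module.Finite ℤ X := Module.Finite.iff_addGroup_fg.mpr this
  obtain ⟨h0, hle⟩ := index_nsmul_le_of_fg X hp
  have hfr : Module.finrank ℤ (X ⧸ Submodule.torsion ℤ X) ≤ n := by
    by_contra! hlt
    obtain ⟨v, hv⟩ := exists_linearIndependent_of_le_finrank (R := ℤ) (Nat.succ_le_of_lt hlt)
    choose x hx using fun i => (Submodule.torsion ℤ X).mkQ_surjective (v i)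
    obtain ⟨c, hc, hsum⟩ := hrank (fun i => (x i : D))
    apply hc
    have hX : ∑ i, c i • x i = 0 := by
      apply Subtype.ext; simpa using hsum
    funext i
    refine Fintype.linearIndependent_iff.mp hv c ?_ i
    simpa [hx] using congrArg (Submodule.torsion ℤ X).mkQ hX
  have hker : Nat.card (nsmulAddMonoidHom (α := X) p).ker ≤
      Nat.card (nsmulAddMonoidHom (α := D) p).ker := by
    refine Nat.card_le_card_of_injective
      (fun x => ⟨((x : X) : D), by
        have := x.2
        rw [AddMonoidHom.mem_ker] at this ⊢
        simpa using congrArg (Subtype.val) this⟩) ?_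
    intro x y h
    apply Subtype.ext; apply Subtype.ext
    simpa using h
  have hbound : (nsmulAddMonoidHom (α := X) p).range.index ≤ C := by
    refine hle.trans (Nat.mul_le_mul (Nat.pow_le_pow_right (Nat.pos_of_ne_zero hp) hfr) hker)
  let r : X →+ D ⧸ N := (QuotientAddGroup.mk' N).comp X.subtype
  have hr : (nsmulAddMonoidHom (α := X) p).range ≤ r.ker := by
    rintro _ ⟨x, rfl⟩
    rw [AddMonoidHom.mem_ker]
    exact (QuotientAddGroup.eq_zero_iff _).mpr ⟨(x : D), by simp⟩
  have hdvd := AddSubgroup.index_dvd_of_le hr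
  rw [AddSubgroup.index_ker] at hdvd
  have hcard : Nat.card r.range ≤ C := (Nat.le_of_dvd (Nat.pos_of_ne_zero h0) hdvd).trans hbound
  have hfin : Finite r.range := Nat.finite_of_card_ne_zero (fun h => by
    rw [h] at hdvd; exact h0 (Nat.eq_zero_of_zero_dvd hdvd))
  have hSr : (S : Set (D ⧸ N)) ⊆ r.range := by
    intro s hs
    refine ⟨⟨Quotient.out s, AddSubgroup.subset_closure ⟨s, hs, rfl⟩⟩, ?_⟩
    exact Quotient.out_eq' s
  have := Set.ncard_le_ncard hSr (Set.toFinite _)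
  rw [Set.ncard_coe_finset, hS, ← Nat.card_coe_set_eq] at this
  have h' : C + 1 ≤ Nat.card r.range := this
  omega

/-! ### Elementary abelian sections -/

/-- Every elementary abelian section of `G` is finite: if `L` is commutative and of exponent `p`
modulo `M`, for a prime `p`, then `M` has finite index in `L`. The subgroup `M` is not required to
lie in `L`; the hypotheses and the relative index only depend on `M ⊓ L`, which is automatically
normal in `L`. -/
def FinElemSections (G : Type*) [Group G] : Prop :=
  ∀ p : ℕ, p.Prime → ∀ M L : Subgroup G, (∀ x ∈ L, ∀ y ∈ L, ⁅x, y⁆ ∈ M) →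
    (∀ x ∈ L, x ^ p ∈ M) → M.relIndex L ≠ 0

theorem FinElemSections.of_injective {G K : Type*} [Group G] [Group K]
    (hG : FinElemSections G) (f : K →* G) (hf : Function.Injective f) : FinElemSections K := by
  intro p hp M L hc hx
  rw [← Subgroup.relIndex_map_map_of_injective M L hf]
  refine hG p hp _ _ ?_ ?_
  · rintro _ ⟨x, hx, rfl⟩ _ ⟨y, hy, rfl⟩
    exact ⟨_, hc x hx y hy, map_commutatorElement f x y⟩
  · rintro _ ⟨x, hxL, rfl⟩
    exact ⟨_, hx x hxL, map_pow f x p⟩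

theorem FinElemSections.of_surjective {G K : Type*} [Group G] [Group K]
    (hG : FinElemSections G) (f : G →* K) (hf : Function.Surjective f) : FinElemSections K := by
  intro p hp M L hc hx
  rw [← Subgroup.map_comap_eq_self_of_surjective hf L, ← Subgroup.relIndex_comap]
  refine hG p hp _ _ ?_ ?_
  · intro x hx y hy
    rw [Subgroup.mem_comap, map_commutatorElement]
    exact hc _ hx _ hy
  · intro x hxL
    rw [Subgroup.mem_comap, map_pow]
    exact hx _ hxL

/-- Multiplicativity of `[A : A ^ m]` reduces finiteness to prime `m`. -/
theorem FinElemSections.index_pow_ne_zero {A : Type*} [CommGroup A] (hA : FinElemSections A)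
    {m : ℕ} (hm : m ≠ 0) : (powMonoidHom m : A →* A).range.index ≠ 0 := by
  induction m using Nat.recOnMul with
  | zero => exact absurd rfl hm
  | one =>
    have : (powMonoidHom 1 : A →* A).range = ⊤ := by
      rw [MonoidHom.range_eq_top]; intro x; exact ⟨x, by simp⟩
    simp [this]
  | prime p hp =>
    rw [← Subgroup.relIndex_top_right]
    refine hA p hp _ _ ?_ ?_
    · intro x _ y _
      rw [commutatorElement_eq_one_iff_mul_comm.mpr (mul_comm x y)]
      exact one_mem _
    · exact fun x _ => ⟨x, rfl⟩
  | mul a b iha ihb =>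
    have ha : a ≠ 0 := left_ne_zero_of_mul hm
    have hb : b ≠ 0 := right_ne_zero_of_mul hm
    have : (powMonoidHom (a * b) : A →* A).range =
        (powMonoidHom a : A →* A).range.map (powMonoidHom b) := by
      ext x
      simp [pow_mul]
    rw [this, Subgroup.index_map]
    refine mul_ne_zero ?_ (ihb hb)
    intro h0
    refine iha ha ?_
    exact Nat.eq_zero_of_zero_dvd (h0 ▸ Subgroup.index_dvd_of_le le_sup_left)

theorem FinElemSections.finite_of_pow_eq_one {A : Type*} [CommGroup A] (hA : FinElemSections A)
    {m : ℕ} (hm : m ≠ 0) (h : ∀ x : A, x ^ m = 1) : Finite A := by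
  have h1 := hA.index_pow_ne_zero hm
  have : (powMonoidHom m : A →* A).range = ⊥ := by
    rw [eq_bot_iff]
    rintro _ ⟨x, rfl⟩
    exact h x
  rw [this, Subgroup.index_bot] at h1
  exact Nat.finite_of_card_ne_zero h1

theorem subgroupOf_normal_of_commutator {G : Type*} [Group G] {M L : Subgroup G}
    (hc : ∀ x ∈ L, ∀ y ∈ L, ⁅x, y⁆ ∈ M) : (M.subgroupOf L).Normal := by
  refine ⟨fun y hy x => ?_⟩
  have h := M.mul_mem (hc x x.2 y y.2) hy
  rw [commutatorElement_def] at h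
  simpa [Subgroup.mem_subgroupOf] using h

theorem quotient_mul_comm_of_commutator {G : Type*} [Group G] {N : Subgroup G} [N.Normal]
    (hc : ∀ x y : G, ⁅x, y⁆ ∈ N) (a b : G ⧸ N) : a * b = b * a := by
  obtain ⟨x, rfl⟩ := QuotientGroup.mk'_surjective N a
  obtain ⟨y, rfl⟩ := QuotientGroup.mk'_surjective N b
  rw [← commutatorElement_eq_one_iff_mul_comm, ← map_commutatorElement]
  exact (QuotientGroup.eq_one_iff _).mpr (hc x y)

/-- Sections that are abelian of finite exponent are finite, without primality of the exponent. -/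
theorem FinElemSections.relIndex_ne_zero {G : Type*} [Group G] (hG : FinElemSections G)
    {m : ℕ} (hm : m ≠ 0) {M L : Subgroup G} (hc : ∀ x ∈ L, ∀ y ∈ L, ⁅x, y⁆ ∈ M)
    (hx : ∀ x ∈ L, x ^ m ∈ M) : M.relIndex L ≠ 0 := by
  have := subgroupOf_normal_of_commutator hc
  let _ : CommGroup (L ⧸ M.subgroupOf L) :=
    { QuotientGroup.Quotient.group (M.subgroupOf L) with
      mul_comm := quotient_mul_comm_of_commutator fun x y => hc x x.2 y y.2 }
  have hA : FinElemSections (L ⧸ M.subgroupOf L) :=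
    (hG.of_injective L.subtype L.subtype_injective).of_surjective
      (QuotientGroup.mk' _) (QuotientGroup.mk'_surjective _)
  have hfin : Finite (L ⧸ M.subgroupOf L) := by
    refine hA.finite_of_pow_eq_one hm fun a => ?_
    obtain ⟨x, rfl⟩ := QuotientGroup.mk'_surjective _ a
    rw [← map_pow]
    exact (QuotientGroup.eq_one_iff _).mpr (hx x x.2)
  exact Subgroup.index_ne_zero_of_finite

/-- For an abelian FAR factor `H / K`, a section `L / M` of exponent `p` with `L ≤ H` and
`K ⊓ L ≤ M` is finite: it is a quotient of `A / A ^ p`, where `A = L / (K ⊓ L)` embeds in `H / K`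
and so has finite rank and finite `p`-torsion. -/
theorem relIndex_ne_zero_of_isFARFactor {G : Type*} [Group G] {K H : Subgroup G}
    (hKH : IsFARFactor K H) {p : ℕ} (hp : p.Prime) {M L : Subgroup G} (hLH : L ≤ H)
    (hKM : K ⊓ L ≤ M) (hx : ∀ x ∈ L, x ^ p ∈ M) : M.relIndex L ≠ 0 := by
  obtain ⟨hle, hnorm, hcomm, ⟨n, hrank⟩, htors⟩ := hKH
  have hN : (K.subgroupOf L).Normal :=
    subgroupOf_normal_of_commutator fun x hx y hy => hcomm x (hLH hx) y (hLH hy)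
  set N := K.subgroupOf L with hNdef
  let _ : CommGroup (L ⧸ N) :=
    { QuotientGroup.Quotient.group N with
      mul_comm := quotient_mul_comm_of_commutator fun x y => hcomm x (hLH x.2) y (hLH y.2) }
  have hidx : (powMonoidHom p : (L ⧸ N) →* (L ⧸ N)).range.index ≠ 0 := by
    refine index_nsmul_ne_zero_of_rank (Additive (L ⧸ N)) (n := n) hp.ne_zero ?_ ?_
    · intro f
      choose g hg using fun i => QuotientGroup.mk'_surjective N (f i).toMul
      obtain ⟨c, hc, hprod⟩ := hrank (fun i => (g i : G)) fun i => hLH (g i).2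
      refine ⟨c, hc, ?_⟩
      have h1 : (List.ofFn fun i => g i ^ c i).prod ∈ N := by
        rw [hNdef, Subgroup.mem_subgroupOf]
        convert hprod
        simp [← Subgroup.coe_subtype, List.map_ofFn, Function.comp_def]
      have h2 := (QuotientGroup.eq_one_iff _).mpr h1
      apply Additive.toMul.injective
      rw [toMul_sum, toMul_zero, ← h2, ← QuotientGroup.mk'_apply, map_list_prod, List.map_ofFn,
        List.prod_ofFn]
      refine Finset.prod_congr rfl fun i _ => ?_
      rw [toMul_zsmul, ← hg]; rfl
    · obtain ⟨F, hF⟩ := htors p hp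
      classical
      have hfin : Finite (powMonoidHom p : (L ⧸ N) →* (L ⧸ N)).ker := by
        have key : ∀ a : (powMonoidHom p : (L ⧸ N) →* (L ⧸ N)).ker, ∃ b : F, ∃ x : L,
            QuotientGroup.mk' N x = a ∧ (b : G)⁻¹ * x ∈ K := by
          rintro ⟨a, ha⟩
          obtain ⟨x, rfl⟩ := QuotientGroup.mk'_surjective N a
          have hxp : QuotientGroup.mk' N (x ^ p) = 1 := by rw [map_pow]; exact ha
          have hxN : x ^ p ∈ N := (QuotientGroup.eq_one_iff _).mp hxp
          obtain ⟨b, hb, hbx⟩ := hF x (hLH x.2) (by simpa [hNdef, Subgroup.mem_subgroupOf] using hxN)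
          exact ⟨⟨b, hb⟩, x, rfl, hbx⟩
        choose b x hxa hbx using key
        refine Finite.of_injective b fun a a' haa => ?_
        apply Subtype.ext
        rw [← hxa a, ← hxa a']
        refine QuotientGroup.eq.mpr ?_
        have := K.mul_mem (K.inv_mem (hbx a)) (haa ▸ hbx a')
        rw [hNdef, Subgroup.mem_subgroupOf]
        simpa [mul_assoc] using this
      exact hfin
  have hNM : N ≤ M.subgroupOf L := by
    intro x hx
    exact hKM ⟨hx, x.2⟩
  have h1 : ((M.subgroupOf L).map (QuotientGroup.mk' N)).index = (M.subgroupOf L).index :=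
    Subgroup.index_map_eq _ (QuotientGroup.mk'_surjective N) (by rwa [QuotientGroup.ker_mk'])
  rw [Subgroup.relIndex, ← h1]
  intro h0
  refine hidx (Nat.eq_zero_of_zero_dvd (h0 ▸ Subgroup.index_dvd_of_le ?_))
  rintro _ ⟨a, rfl⟩
  obtain ⟨x, rfl⟩ := QuotientGroup.mk'_surjective N a
  exact ⟨x ^ p, hx x x.2, by simp⟩

/-- Induction along a FAR series, splitting a section `L / M` by the intersection of `L` with the
next lower term. -/
theorem IsFARGroup.finElemSections {G : Type*} [Group G] (hG : IsFARGroup G) :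
    FinElemSections G := by
  obtain ⟨n, s, h0, hn, hs⟩ := hG
  intro p hp
  suffices h : ∀ i : Fin (n + 1), ∀ M L : Subgroup G, L ≤ s i →
      (∀ x ∈ L, ∀ y ∈ L, ⁅x, y⁆ ∈ M) → (∀ x ∈ L, x ^ p ∈ M) → M.relIndex L ≠ 0 from
    fun M L => h (Fin.last n) M L (hn ▸ le_top)
  intro i
  induction i using Fin.induction with
  | zero =>
    intro M L hL _ _
    rw [h0, le_bot_iff] at hL
    simp [hL]
  | succ i ih =>
    intro M L hL hc hx
    -- the part of `L` in the lower term of the series, and the factor above it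
    have h1 : M.relIndex (L ⊓ s i.castSucc) ≠ 0 :=
      ih M _ inf_le_right (fun x hx y hy => hc x hx.1 y hy.1) fun x h => hx x h.1
    have hnorm : ((s i.castSucc).subgroupOf L).Normal :=
      subgroupOf_normal_of_commutator fun x hx y hy => (hs i).2.2.1 x (hL hx) y (hL hy)
    have h2 : ((M ⊓ L) ⊔ (L ⊓ s i.castSucc)).relIndex L ≠ 0 :=
      relIndex_ne_zero_of_isFARFactor (hs i) hp hL
        ((inf_comm _ _).le.trans le_sup_right)
        fun x h => Subgroup.mem_sup_left ⟨hx x h, L.pow_mem h p⟩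
    set M' := M.subgroupOf L
    set S := (s i.castSucc).subgroupOf L
    have e1 : M.relIndex (L ⊓ s i.castSucc) = M'.relIndex S := by
      rw [← Subgroup.relIndex_map_map_of_injective _ _ L.subtype_injective,
        Subgroup.subgroupOf_map_subtype, Subgroup.subgroupOf_map_subtype, inf_comm L,
        ← Subgroup.inf_relIndex_right (M ⊓ L), ← Subgroup.inf_relIndex_right M]
      congr 1
      ext x; simp only [Subgroup.mem_inf]; tauto
    have e2 : ((M ⊓ L) ⊔ (L ⊓ s i.castSucc)).relIndex L = (M' ⊔ S).index := by
      rw [← Subgroup.relIndex_top_right (M' ⊔ S),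
        ← Subgroup.relIndex_map_map_of_injective _ _ L.subtype_injective, Subgroup.map_sup,
        Subgroup.subgroupOf_map_subtype, Subgroup.subgroupOf_map_subtype, inf_comm L]
      rw [← MonoidHom.range_eq_map, Subgroup.range_subtype]
    have hM' : M'.Normal := subgroupOf_normal_of_commutator hc
    rw [Subgroup.relIndex, ← Subgroup.relIndex_mul_index (le_sup_left : M' ≤ M' ⊔ S),
      Subgroup.relIndex_sup_left, ← e1, ← e2]
    exact mul_ne_zero h1 h2

theorem IsFARGroup.exists_derivedSeries_eq_bot {G : Type*} [Group G] (hG : IsFARGroup G) :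
    ∃ d, derivedSeries G d = ⊥ := by
  obtain ⟨n, s, h0, hn, hs⟩ := hG
  suffices h : ∀ i : Fin (n + 1), ∃ d, derivedSeries G d ≤ s i by
    obtain ⟨d, hd⟩ := h 0
    exact ⟨d, le_bot_iff.mp (h0 ▸ hd)⟩
  intro i
  induction i using Fin.reverseInduction with
  | last => exact ⟨0, hn ▸ le_top⟩
  | cast i ih =>
    obtain ⟨d, hd⟩ := ih
    refine ⟨d + 1, ?_⟩
    rw [derivedSeries_succ, Subgroup.commutator_le]
    exact fun x hx y hy => (hs i).2.2.1 x (hd hx) y (hd hy)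

/-! ### Injective endomorphisms of abelian groups -/

open TensorProduct in
/-- A basis of `ℚ ⊗ A` taken from the image of `A` lifts to a free abelian subgroup of `A`, whose
basis elements are distinct modulo 2. -/
theorem FinElemSections.finite_rat_tensor {A : Type*} [CommGroup A] (hA : FinElemSections A) :
    Module.Finite ℚ (ℚ ⊗[ℤ] Additive A) := by
  let f : Additive A →ₗ[ℤ] ℚ ⊗[ℤ] Additive A := TensorProduct.mk ℤ ℚ (Additive A) 1
  have hspan : Submodule.span ℚ (Set.range f) = ⊤ := by
    rw [eq_top_iff]
    rintro v -
    induction v with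
    | zero => exact zero_mem _
    | add x y hx hy => exact add_mem hx hy
    | tmul q a =>
      have : q ⊗ₜ[ℤ] a = q • f a := by
        change q ⊗ₜ[ℤ] a = q • ((1 : ℚ) ⊗ₜ[ℤ] a)
        simp [TensorProduct.smul_tmul']
      rw [this]
      exact Submodule.smul_mem _ _ (Submodule.subset_span ⟨a, rfl⟩)
  obtain ⟨b, hb, hbs, hli⟩ := exists_linearIndependent ℚ (Set.range f)
  rw [hspan] at hbs
  suffices hfin : b.Finite from ⟨⟨hfin.toFinset, by simpa using hbs⟩⟩
  choose a ha using fun i : b => hb i.2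
  have hliA : LinearIndependent ℤ a := by
    refine LinearIndependent.of_comp f ?_
    have : f ∘ a = Subtype.val := funext ha
    rw [this]
    exact hli.restrict_scalars' ℤ
  let g : (b →₀ ℤ) →+ Additive A := (Finsupp.linearCombination ℤ a).toAddMonoidHom
  have hg : Function.Injective g := hliA
  have hF : FinElemSections (Multiplicative (b →₀ ℤ)) :=
    hA.of_injective (AddMonoidHom.toMultiplicativeLeft g) hg
  have hidx := hF.index_pow_ne_zero two_ne_zero
  have : Finite (Multiplicative (b →₀ ℤ) ⧸
      (powMonoidHom 2 : Multiplicative (b →₀ ℤ) →* Multiplicative (b →₀ ℤ)).range) :=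
    Nat.finite_of_card_ne_zero hidx
  refine Set.finite_coe_iff.mp (Finite.of_injective (fun i : b => QuotientGroup.mk (s := (powMonoidHom 2 :
    Multiplicative (b →₀ ℤ) →* Multiplicative (b →₀ ℤ)).range)
    (Multiplicative.ofAdd (Finsupp.single i (1 : ℤ)))) ?_)
  intro i j hij
  by_contra hne
  obtain ⟨z, hz⟩ := QuotientGroup.eq.mp hij
  have h1 := DFunLike.congr_fun (congrArg Multiplicative.toAdd hz) i
  have h2 : 2 * (z.toAdd i) = -1 := by
    simpa [Finsupp.single_apply, Ne.symm hne, hne] using h1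
  omega

open Polynomial in
/-- If `P` is an integral multiple of the characteristic polynomial of `F`, then `P(φ)` has
torsion values, as `P(F) = 0` and the kernel of `f` is torsion. Writing `P = X * Q + P(0)`, the
element `P(0) • a` is congruent to `φ (-Q(φ) a)` modulo torsion, and `P(0) ≠ 0` because `F` is
injective. The map `f` stands for `A → ℚ ⊗ A`. -/
theorem exists_zsmul_sub_torsion_aux {A V : Type*} [AddCommGroup A] [AddCommGroup V] [Module ℤ V] [Module ℚ V]
    [IsScalarTower ℤ ℚ V]
    [Module.Finite ℚ V] (f : A →ₗ[ℤ] V) [IsLocalizedModule (nonZeroDivisors ℤ) f]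
    (φ : A →ₗ[ℤ] A) (F : Module.End ℚ V) (hF : Function.Injective F)
    (hFf : ∀ a, F (f a) = f (φ a)) :
    ∃ m : ℤ, m ≠ 0 ∧ ∀ a, ∃ b, ∃ k : ℤ, k ≠ 0 ∧ k • (m • a - φ b) = 0 := by
  have hc0 : F.charpoly.coeff 0 ≠ 0 := by
    have hdet : LinearMap.det F ≠ 0 := by
      intro h0
      have := LinearMap.bot_lt_ker_of_det_eq_zero h0
      rw [LinearMap.ker_eq_bot.mpr hF] at this
      exact lt_irrefl _ this
    intro h0
    rw [LinearMap.det_eq_sign_charpoly_coeff, h0, mul_zero] at hdet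
    exact hdet rfl
  obtain ⟨b, hb, hbP⟩ := IsLocalization.integerNormalization_spec (nonZeroDivisors ℤ) F.charpoly
  generalize IsLocalization.integerNormalization (nonZeroDivisors ℤ) F.charpoly = P at hbP
  have hPF : aeval F (P.map (algebraMap ℤ ℚ)) = 0 := by
    rw [hbP, ← IsScalarTower.algebraMap_smul ℚ b, map_smul, LinearMap.aeval_self_charpoly,
      smul_zero]
  have hP0 : P.coeff 0 ≠ 0 := by
    have := congrArg (fun q => q.coeff 0) hbP
    simp only [coeff_map, coeff_smul] at this
    intro h0
    rw [h0] at this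
    have hb0 : b ≠ 0 := nonZeroDivisors.ne_zero hb
    simp_all
  have hcomm : ∀ (Q : ℤ[X]) (a : A), f (aeval φ Q a) = aeval F (Q.map (algebraMap ℤ ℚ)) (f a) := by
    intro Q a
    induction Q using Polynomial.induction_on' with
    | add p q hp hq => simp [hp, hq]
    | monomial n c =>
      have hn : ∀ n : ℕ, f ((φ ^ n) a) = (F ^ n) (f a) := by
        intro n
        induction n with
        | zero => simp
        | succ n ih => rw [pow_succ', pow_succ', Module.End.mul_apply, Module.End.mul_apply, ← ih, hFf]
      simp [aeval_monomial, hn]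
      exact int_smul_eq_zsmul ‹Module ℤ V› c _
  refine ⟨P.coeff 0, hP0, fun a => ⟨-(aeval φ P.divX a), ?_⟩⟩
  have hsplit : aeval φ P a = P.coeff 0 • a - φ (-(aeval φ P.divX a)) := by
    conv_lhs => rw [← X_mul_divX_add P]
    simp [add_comm]
  have hker : f (aeval φ P a) = f 0 := by rw [hcomm, hPF]; simp
  obtain ⟨k, hk⟩ := (IsLocalizedModule.eq_iff_exists (nonZeroDivisors ℤ) f).mp hker
  refine ⟨k, nonZeroDivisors.ne_zero k.2, ?_⟩
  rw [← hsplit]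
  simpa [Submonoid.smul_def] using hk

open TensorProduct in
theorem exists_zsmul_sub_torsion {A : Type*} [AddCommGroup A] [Module.Finite ℚ (ℚ ⊗[ℤ] A)]
    (φ : A →ₗ[ℤ] A) (hφ : Function.Injective φ) :
    ∃ m : ℤ, m ≠ 0 ∧ ∀ a, ∃ b, ∃ k : ℤ, k ≠ 0 ∧ k • (m • a - φ b) = 0 :=
  have := (isLocalizedModule_iff_isBaseChange (nonZeroDivisors ℤ) ℚ _).mpr
    (TensorProduct.isBaseChange ℤ A ℚ)
  exists_zsmul_sub_torsion_aux (TensorProduct.mk ℤ ℚ A 1) φ (LinearMap.baseChange ℚ φ)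
    (Module.Flat.lTensor_preserves_injective_linearMap (M := ℚ) φ hφ)
    fun a => LinearMap.baseChange_tmul φ (1 : ℚ) a

/-- Torsion elements lie in the image of `φ`: the `k`-torsion is finite and `φ` maps it injectively
to itself. -/
theorem FinElemSections.exists_eq_of_pow_eq_one {A : Type*} [CommGroup A]
    (hA : FinElemSections A) (φ : A →* A) (hφ : Function.Injective φ) {k : ℕ} (hk : k ≠ 0)
    {x : A} (hx : x ^ k = 1) : ∃ y, φ y = x := by
  have : Finite (powMonoidHom k : A →* A).ker :=
    (hA.of_injective _ (powMonoidHom k : A →* A).ker.subtype_injective).finite_of_pow_eq_one hk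
      fun y => Subtype.ext y.2
  let ψ : (powMonoidHom k : A →* A).ker → (powMonoidHom k : A →* A).ker := fun y =>
    ⟨φ y, by
      have h : (y : A) ^ k = 1 := y.2
      rw [MonoidHom.mem_ker, powMonoidHom_apply, ← map_pow, h, map_one]⟩
  have hψ : Function.Injective ψ := fun y z h =>
    Subtype.ext (hφ (congrArg Subtype.val h))
  obtain ⟨y, hy⟩ := (Finite.surjective_of_injective hψ) ⟨x, hx⟩
  exact ⟨y, congrArg Subtype.val hy⟩

theorem FinElemSections.index_range_ne_zero_of_comm {A : Type*} [CommGroup A]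
    (hA : FinElemSections A) (φ : A →* A) (hφ : Function.Injective φ) : φ.range.index ≠ 0 := by
  have := hA.finite_rat_tensor
  obtain ⟨m, hm, h⟩ := exists_zsmul_sub_torsion (MonoidHom.toAdditive φ).toIntLinearMap hφ
  have hm' : m.natAbs ≠ 0 := Int.natAbs_ne_zero.mpr hm
  intro h0
  refine hA.index_pow_ne_zero hm' (Nat.eq_zero_of_zero_dvd (h0 ▸ Subgroup.index_dvd_of_le ?_))
  rintro _ ⟨a, rfl⟩
  have hz : a ^ m ∈ φ.range := by
    obtain ⟨b, k, hk, hab⟩ := h (Additive.ofMul a)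
    have h1 : (a ^ m / φ b.toMul) ^ k = 1 := hab
    have h2 : (a ^ m / φ b.toMul) ^ k.natAbs = 1 := by
      rwa [pow_natAbs_eq_one]
    obtain ⟨y, hy⟩ := hA.exists_eq_of_pow_eq_one φ hφ (Int.natAbs_ne_zero.mpr hk) h2
    exact ⟨y * b.toMul, by rw [map_mul, hy, div_mul_cancel]⟩
  rw [powMonoidHom_apply]
  rcases Int.natAbs_eq m with h | h
  · rw [h, zpow_natCast] at hz; exact hz
  · rw [h, zpow_neg, zpow_natCast] at hz; exact φ.range.inv_mem_iff.mp hz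

/-- The second isomorphism theorem for indices, with the normality assumption on `N` instead of
`H`. -/
theorem relIndex_sup_ne_zero {G : Type*} [Group G] {H N : Subgroup G} [N.Normal]
    (h : H.relIndex N ≠ 0) : H.relIndex (H ⊔ N) ≠ 0 := by
  have : Finite (N ⧸ H.subgroupOf N) := Nat.finite_of_card_ne_zero h
  have hs : Function.Surjective (Subgroup.quotientSubgroupOfEmbeddingOfLE H
      (le_sup_right : N ≤ H ⊔ N)) := by
    intro q
    obtain ⟨⟨x, hx⟩, rfl⟩ := QuotientGroup.mk_surjective q
    rw [sup_comm, ← SetLike.mem_coe, Subgroup.normal_mul] at hx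
    obtain ⟨n, hn, y, hy, rfl⟩ := hx
    refine ⟨QuotientGroup.mk ⟨n, hn⟩, ?_⟩
    rw [Subgroup.quotientSubgroupOfEmbeddingOfLE_apply_mk]
    refine QuotientGroup.eq.mpr ?_
    rw [Subgroup.mem_subgroupOf]
    simpa using hy
  have := Finite.of_surjective _ hs
  exact Subgroup.index_ne_zero_of_finite

theorem derivedSeries_eq_bot_of_injective {G K : Type*} [Group G] [Group K] {d : ℕ}
    (hG : derivedSeries G d = ⊥) (f : K →* G) (hf : Function.Injective f) :
    derivedSeries K d = ⊥ := by
  rw [← Subgroup.map_eq_bot_iff_of_injective _ hf, ← le_bot_iff, ← hG]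
  exact map_derivedSeries_le_derivedSeries f d

/-! ### Solvable groups and the virtual case -/

/-- The subgroup of all elements that `φ` moves into `D` eventually: all large iterates of `φ`
map them into `D`. -/
def eventualPreimage {G : Type*} [Group G] (φ : G →* G) (D : Subgroup G) : Subgroup G where
  carrier := {x | ∃ k : ℕ, ∀ j, k ≤ j → φ^[j] x ∈ D}
  one_mem' := ⟨0, fun j _ => by rw [iterate_map_one]; exact one_mem _⟩
  mul_mem' := by
    rintro x y ⟨k, hk⟩ ⟨l, hl⟩
    refine ⟨max k l, fun j hj => ?_⟩
    rw [iterate_map_mul]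
    exact mul_mem (hk j (le_of_max_le_left hj)) (hl j (le_of_max_le_right hj))
  inv_mem' := by
    rintro x ⟨k, hk⟩
    refine ⟨k, fun j hj => ?_⟩
    rw [iterate_map_inv]
    exact inv_mem (hk j hj)

theorem mem_eventualPreimage {G : Type*} [Group G] {φ : G →* G} {D : Subgroup G} {x : G} :
    x ∈ eventualPreimage φ D ↔ ∃ k : ℕ, ∀ j, k ≤ j → φ^[j] x ∈ D :=
  Iff.rfl

/-- This is `φ⁻¹(N) = N` for the eventual preimage `N`; it makes the map induced by `φ` on the
quotient by `N` injective. -/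
theorem map_mem_eventualPreimage_iff {G : Type*} [Group G] {φ : G →* G} {D : Subgroup G} {x : G} :
    φ x ∈ eventualPreimage φ D ↔ x ∈ eventualPreimage φ D := by
  simp only [mem_eventualPreimage, ← Function.iterate_succ_apply]
  constructor
  · rintro ⟨k, hk⟩
    refine ⟨k + 1, fun j hj => ?_⟩
    obtain ⟨i, rfl⟩ : ∃ i, j = i + 1 := ⟨j - 1, by omega⟩
    exact hk i (by omega)
  · rintro ⟨k, hk⟩
    exact ⟨k, fun j hj => hk (j + 1) (by omega)⟩

theorem le_eventualPreimage {G : Type*} [Group G] {φ : G →* G} {D : Subgroup G}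
    (hD : D.map φ ≤ D) : D ≤ eventualPreimage φ D := by
  intro x hx
  refine ⟨0, fun j _ => ?_⟩
  induction j with
  | zero => exact hx
  | succ j ih =>
    rw [Function.iterate_succ_apply']
    exact hD ⟨_, ih (Nat.zero_le _), rfl⟩

instance eventualPreimage_normal {G : Type*} [Group G] (φ : G →* G) (D : Subgroup G)
    [hD : D.Normal] : (eventualPreimage φ D).Normal := by
  refine ⟨?_⟩
  rintro x ⟨k, hk⟩ g
  refine ⟨k, fun j hj => ?_⟩
  rw [iterate_map_mul, iterate_map_mul, iterate_map_inv]
  exact hD.conj_mem _ (hk j hj) _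

theorem FinElemSections.index_range_ne_zero_of_solvable {d : ℕ} :
    ∀ {G : Type*} [Group G], FinElemSections G → derivedSeries G d = ⊥ →
      ∀ φ : G →* G, Function.Injective φ → φ.range.index ≠ 0 := by
  induction d with
  | zero =>
    intro G _ _ h φ _
    have : φ.range = ⊤ := top_le_iff.mp ((derivedSeries_zero G ▸ h).le.trans bot_le)
    simp [this]
  | succ d ih =>
    intro G _ hG h φ hφ
    set D := derivedSeries G d with hD
    set N := eventualPreimage φ D with hN
    have hDnorm : D.Normal := derivedSeries_normal G d
    have hNnorm : N.Normal := eventualPreimage_normal φ D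
    -- a high iterate of `φ` sends `x` and `y` into the abelian group `D`
    have hNcomm : ∀ x ∈ N, ∀ y ∈ N, x * y = y * x := by
      rintro x ⟨k, hk⟩ y ⟨l, hl⟩
      apply hφ.iterate (max k l)
      rw [iterate_map_mul, iterate_map_mul, ← commutatorElement_eq_one_iff_mul_comm,
        ← Subgroup.mem_bot, ← h, derivedSeries_succ]
      exact Subgroup.commutator_mem_commutator (hk _ (le_max_left _ _)) (hl _ (le_max_right _ _))
    let _ : CommGroup N :=
      { (inferInstance : Group N) with
        mul_comm := fun x y => Subtype.ext (hNcomm x x.2 y y.2) }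
    let φN : N →* N := (φ.comp N.subtype).codRestrict N
      fun x => map_mem_eventualPreimage_iff.mpr x.2
    have hφN : Function.Injective φN := fun x y hxy =>
      Subtype.ext (hφ (congrArg Subtype.val hxy))
    have h1 : φ.range.relIndex N ≠ 0 := by
      intro h0
      refine (hG.of_injective N.subtype N.subtype_injective).index_range_ne_zero_of_comm φN hφN
        (Nat.eq_zero_of_zero_dvd (h0 ▸ Subgroup.index_dvd_of_le ?_))
      rintro _ ⟨x, rfl⟩
      exact ⟨x, rfl⟩
    let φQ : G ⧸ N →* G ⧸ N := QuotientGroup.map N N φ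
      fun x hx => map_mem_eventualPreimage_iff.mpr hx
    have hφQ : Function.Injective φQ := by
      rw [injective_iff_map_eq_one]
      intro a ha
      obtain ⟨x, rfl⟩ := QuotientGroup.mk'_surjective N a
      exact (QuotientGroup.eq_one_iff _).mpr
        (map_mem_eventualPreimage_iff.mp ((QuotientGroup.eq_one_iff _).mp ha))
    have hQ : derivedSeries (G ⧸ N) d = ⊥ := by
      rw [← map_derivedSeries_eq (QuotientGroup.mk'_surjective N), Subgroup.map_eq_bot_iff,
        QuotientGroup.ker_mk']
      exact le_eventualPreimage (map_derivedSeries_le_derivedSeries φ d)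
    have h2 := ih (hG.of_surjective _ (QuotientGroup.mk'_surjective N)) hQ φQ hφQ
    have h3 : φQ.range = φ.range.map (QuotientGroup.mk' N) := by
      ext a
      constructor
      · rintro ⟨b, rfl⟩
        obtain ⟨x, rfl⟩ := QuotientGroup.mk'_surjective N b
        exact ⟨φ x, ⟨x, rfl⟩, rfl⟩
      · rintro ⟨_, ⟨x, rfl⟩, rfl⟩
        exact ⟨QuotientGroup.mk' N x, rfl⟩
    have h4 : (φ.range ⊔ N).index ≠ 0 := by
      rw [h3, Subgroup.index_map, QuotientGroup.ker_mk'] at h2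
      exact left_ne_zero_of_mul h2
    rw [← Subgroup.relIndex_mul_index (le_sup_left : φ.range ≤ φ.range ⊔ N)]
    exact mul_ne_zero (relIndex_sup_ne_zero h1) h4

/-- Each derived quotient is a finite section, being abelian of exponent dividing `m`. -/
theorem FinElemSections.finite_of_solvable {G : Type*} [Group G] (hG : FinElemSections G) {d m : ℕ}
    (hd : derivedSeries G d = ⊥) (hm : m ≠ 0) (hx : ∀ x : G, x ^ m = 1) : Finite G := by
  have h : ∀ i, (derivedSeries G i).index ≠ 0 := by
    intro i
    induction i with
    | zero => simp
    | succ i ih =>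
      rw [← Subgroup.relIndex_mul_index (derivedSeries_antitone G (Nat.le_succ i))]
      refine mul_ne_zero (hG.relIndex_ne_zero hm ?_ ?_) ih
      · exact fun x hx y hy => Subgroup.commutator_mem_commutator hx hy
      · intro x _
        rw [hx]; exact one_mem _
  have h0 := h d
  rw [hd, Subgroup.index_bot] at h0
  exact Nat.finite_of_card_ne_zero h0

theorem range_finiteIndex_of_injective_of_virtuallyFAR
    {G : Type*} [Group G] (hFAR : IsVirtuallyFAR G)
    (φ : G →* G) (hinj : Function.Injective φ) :
    φ.range.FiniteIndex := by
  obtain ⟨H, hHfin, hH⟩ := hFAR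
  obtain ⟨d, hd⟩ := hH.exists_derivedSeries_eq_bot
  set C := H.normalCore with hC
  set m := C.index with hm
  have hm0 : m ≠ 0 := Subgroup.FiniteIndex.index_ne_zero
  have hCS : FinElemSections C := hH.finElemSections.of_injective
    (Subgroup.inclusion H.normalCore_le) (Subgroup.inclusion_injective _)
  have hCd : derivedSeries C d = ⊥ := derivedSeries_eq_bot_of_injective hd
    (Subgroup.inclusion H.normalCore_le) (Subgroup.inclusion_injective _)
  -- the verbal subgroup of `m`-th powers, mapped into itself by all endomorphisms
  set U : Subgroup G := Subgroup.closure (Set.range fun x : G => x ^ m) with hU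
  have hUmap : ∀ ψ : G →* G, U.map ψ ≤ U := by
    intro ψ
    rw [hU, MonoidHom.map_closure, Subgroup.closure_le]
    rintro _ ⟨_, ⟨x, rfl⟩, rfl⟩
    exact Subgroup.subset_closure ⟨ψ x, (map_pow ψ x m).symm⟩
  have hUnorm : U.Normal := ⟨fun x hx g => hUmap (MulAut.conj g).toMonoidHom ⟨x, hx, by simp⟩⟩
  have hUC : U ≤ C := by
    rw [hU, Subgroup.closure_le]
    rintro _ ⟨x, rfl⟩
    exact C.pow_index_mem x
  have hUidx : U.index ≠ 0 := by
    have hfin : Finite (C ⧸ U.subgroupOf C) := by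
      refine (hCS.of_surjective _ (QuotientGroup.mk'_surjective (U.subgroupOf C))).finite_of_solvable
        (d := d) ?_ hm0 fun a => ?_
      · rw [← map_derivedSeries_eq (QuotientGroup.mk'_surjective _), hCd, Subgroup.map_bot]
      · obtain ⟨x, rfl⟩ := QuotientGroup.mk'_surjective _ a
        rw [← map_pow]
        exact (QuotientGroup.eq_one_iff _).mpr (Subgroup.subset_closure ⟨(x : G), rfl⟩)
    rw [← Subgroup.relIndex_mul_index hUC]
    exact mul_ne_zero Subgroup.index_ne_zero_of_finite hm0
  let φU : U →* U := (φ.comp U.subtype).codRestrict U fun x => hUmap φ ⟨x, x.2, rfl⟩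
  have hφU : Function.Injective φU := fun x y hxy =>
    Subtype.ext (hinj (congrArg Subtype.val hxy))
  have hmain : φU.range.index ≠ 0 :=
    (hCS.of_injective (Subgroup.inclusion hUC)
      (Subgroup.inclusion_injective _)).index_range_ne_zero_of_solvable
      (derivedSeries_eq_bot_of_injective hCd (Subgroup.inclusion hUC)
        (Subgroup.inclusion_injective _)) φU hφU
  refine ⟨fun h0 => ?_⟩
  have hle : φU.range.map U.subtype ≤ φ.range := by
    rintro _ ⟨_, ⟨x, rfl⟩, rfl⟩
    exact ⟨x, rfl⟩
  have h1 := Subgroup.index_dvd_of_le hle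
  rw [h0, Subgroup.index_map_subtype] at h1
  exact mul_ne_zero hmain hUidx (Nat.eq_zero_of_zero_dvd h1)
end
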